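/- The number α₁₀ = √21 · ln((√21 − 1)/(√21 + 1)) has irrationality measure at most 3.45357; that is, for every real κ > 3.45357, there exist only finitely many pairs (p, q) with p ∈ ℤ and q a positive integer such that |α₁₀ − p/q| < q^(−κ). -/

import Mathlib

/-!
For `t < 0` with `t * (1 - t)` an integer, expanding the integral
`∫₀¹ xᴺ (1 - x)ᴺ / (x - t)ᴹ⁺¹ dx` in powers of `x - t` and exploiting the symmetry between the
conjugates `t` and `1 - t` gives, after multiplication by a common denominator, a small linear form
with integer coefficients in `1` and `(1 - 2t) log (-t / (1 - t))`. The obvious denominator is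
`lcm (1, …, 2N - M)`, but by Lucas' theorem many primes divide the binomial products
`C(N, i) C(N, j)` whenever they divide `i + j - M`, and these primes can be left out. The prime
number theorem, derived from Ingham's Tauberian theorem via the Fejér kernel, gives the growth of
what remains. Comparing exponential growth rates for `N = 11 m`, `M = 10 m` and `t = (1 - √21) / 2`
yields the exponent.
-/

section IrrationalityMeasure

open Filter Set

/-- The upper bound `μ(α) ≤ c` on the irrationality measure of `α`. It is encoded by exponents
`κ > c` strictly above the bound, so it is insensitive to constant factors in `q ^ (-c)`. -/
def IrrationalityMeasureLE (α c : ℝ) : Prop :=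
  ∀ κ : ℝ, κ > c → {pq : ℤ × ℕ+ |
    |α - (pq.1 : ℝ) / ((pq.2 : ℕ) : ℝ)| < ((pq.2 : ℕ) : ℝ) ^ (-κ)}.Finite

lemma IrrationalityMeasureLE.mono {α c c' : ℝ} (h : IrrationalityMeasureLE α c) (hc : c ≤ c') :
    IrrationalityMeasureLE α c' :=
  fun κ hκ => h κ (hc.trans_lt hκ)

lemma finite_setOf_abs_sub_div_lt (α r : ℝ) {q : ℕ} (hq : 0 < q) :
    {p : ℤ | |α - (p : ℝ) / q| < r}.Finite := by
  have hq' : (0 : ℝ) < q := Nat.cast_pos.2 hq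
  refine (finite_Icc ⌊(α - r) * q⌋ ⌈(α + r) * q⌉).subset fun p hp => ?_
  obtain ⟨hlower, hupper⟩ := abs_lt.1 (mem_ofPred.1 hp)
  have h₁ : (α - r) * q ≤ p := ((lt_div_iff₀ hq').1 (by linarith)).le
  have h₂ : p ≤ (α + r) * q := ((div_lt_iff₀ hq').1 (by linarith)).le
  exact ⟨Int.floor_le_iff.2 (by linarith), Int.le_ceil_iff.2 (by linarith)⟩

lemma irrationalityMeasureLE_of_eventually_le {α c C : ℝ} (hC : 0 < C)
    (h : ∀ᶠ q : ℕ in atTop, ∀ p : ℤ, C * (q : ℝ) ^ (-c) ≤ |α - p / q|) :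
    IrrationalityMeasureLE α c := by
  intro κ hκ
  have hsmall : ∀ᶠ q : ℕ in atTop, (q : ℝ) ^ (-(κ - c)) < C :=
    ((tendsto_rpow_neg_atTop (sub_pos.2 hκ)).comp
      tendsto_natCast_atTop_atTop).eventually_lt_const hC
  obtain ⟨Q, hQ⟩ := eventually_atTop.1 (h.and hsmall)
  have hfinite : (⋃ q ∈ {q : ℕ+ | (q : ℕ) < Q}, (fun p : ℤ => (p, q)) ''
      {p : ℤ | |α - (p : ℝ) / (q : ℕ)| < ((q : ℕ) : ℝ) ^ (-κ)}).Finite :=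
    ((finite_Iio Q).preimage PNat.coe_injective.injOn).biUnion fun q _ =>
      (finite_setOf_abs_sub_div_lt α _ q.pos).image _
  refine hfinite.subset ?_
  rintro ⟨p, q⟩ hpq
  simp only [mem_iUnion]
  refine ⟨q, ?_, p, hpq, rfl⟩
  by_contra hqQ
  obtain ⟨hlower, hsmall⟩ := hQ q (not_lt.1 hqQ)
  have hq : (0 : ℝ) < (q : ℕ) := Nat.cast_pos.2 q.pos
  have : ((q : ℕ) : ℝ) ^ (-κ) < C * ((q : ℕ) : ℝ) ^ (-c) := by
    rw [show -κ = -(κ - c) + -c by ring, Real.rpow_add hq]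
    gcongr
  exact absurd hpq (not_lt.2 (this.le.trans (hlower p)))

/-- If `a * p = b * q` this is an equality; otherwise `1 ≤ |a * p - b * q|` and the triangle
inequality leaves at least half of it to `q * |a| * |α - p / q|`. -/
lemma abs_mul_sub_le_of_two_mul_le_one {α : ℝ} {a b p : ℤ} {q : ℕ} (hq : 0 < q)
    (h : 2 * q * |a * α - b| ≤ 1) : |a * α - b| ≤ |(a : ℝ)| * |α - p / q| := by
  have hq' : (0 : ℝ) < q := Nat.cast_pos.2 hq
  rw [← abs_mul]
  rcases eq_or_ne (a * p) (b * q) with hab | hab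
  · have hab' : (a : ℝ) * p = b * q := by exact_mod_cast hab
    refine le_of_eq (congrArg _ ?_)
    field_simp
    linarith
  · have hone_le : (1 : ℝ) ≤ |(a : ℝ) * p - b * q| := by
      exact_mod_cast Int.one_le_abs (sub_ne_zero.2 hab)
    have hsplit : (a : ℝ) * p - b * q = q * (a * α - b) - q * (a * (α - p / q)) := by
      field_simp
      ring
    have htriangle := abs_sub (q * (a * α - b)) (q * (a * (α - p / q)))
    rw [← hsplit, abs_mul, abs_mul, abs_of_pos hq'] at htriangle
    refine le_of_mul_le_mul_left ?_ hq'
    linarith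

lemma one_le_mul_abs_sub_div {α K : ℝ} {a b p : ℤ} {q : ℕ} (hq : 0 < q) (hne : a * α - b ≠ 0)
    (h : 2 * q * |a * α - b| ≤ 1) (ha : |(a : ℝ)| ≤ K * |a * α - b|) :
    1 ≤ K * |α - p / q| := by
  refine le_of_mul_le_mul_left ?_ (abs_pos.2 hne)
  calc |a * α - b| * 1 ≤ |(a : ℝ)| * |α - p / q| := by
        rw [mul_one]
        exact abs_mul_sub_le_of_two_mul_le_one hq h
    _ ≤ K * |a * α - b| * |α - p / q| := by gcongr
    _ = |a * α - b| * (K * |α - p / q|) := by ring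

lemma two_mul_mul_le_one_of_log_le {C lam x ε q : ℝ} (hC : 0 < C) (hq : 0 < q)
    (hx : Real.log (2 * C * q) ≤ lam * x) (hε : ε ≤ C * Real.exp (-lam * x)) :
    2 * q * ε ≤ 1 := by
  calc 2 * q * ε ≤ 2 * q * (C * Real.exp (-Real.log (2 * C * q))) := by
        gcongr
        refine hε.trans ?_
        rw [neg_mul]
        gcongr
    _ = 1 := by
        rw [Real.exp_neg, Real.exp_log (by positivity)]
        field_simp

lemma exp_mul_le_of_le_log {lam mu x y : ℝ} (hmu : 0 ≤ mu) (hy : 0 < y)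
    (hx : x ≤ Real.log y / lam + 1) : Real.exp (mu * x) ≤ Real.exp mu * y ^ (mu / lam) := by
  rw [Real.rpow_def_of_pos hy, ← Real.exp_add]
  gcongr
  calc mu * x ≤ mu * (Real.log y / lam + 1) := by gcongr
    _ = mu + Real.log y * (mu / lam) := by ring

/-- For a denominator `q`, the form to use is the first one whose size is below `1 / (2 * q)`. -/
theorem irrationalityMeasureLE_of_linearForms {α C C' lam mu : ℝ} (hC : 0 < C) (hC' : 0 < C')
    (hlam : 0 < lam) (hmu : 0 ≤ mu)
    (H : ∀ᶠ n : ℕ in atTop, ∃ a b : ℤ, a * α - b ≠ 0 ∧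
      |a * α - b| ≤ C * Real.exp (-lam * n) ∧ |(a : ℝ)| ≤ C' * Real.exp (mu * n) * |a * α - b|) :
    IrrationalityMeasureLE α (mu / lam) := by
  let x : ℕ → ℝ := fun q => Real.log (2 * C * q) / lam
  have hx : Tendsto x atTop atTop :=
    (Real.tendsto_log_atTop.comp (tendsto_natCast_atTop_atTop.const_mul_atTop
      (by positivity))).atTop_div_const hlam
  refine irrationalityMeasureLE_of_eventually_le
    (C := (C' * (Real.exp mu * (2 * C) ^ (mu / lam)))⁻¹) (by positivity) ?_
  filter_upwards [(tendsto_nat_floor_atTop.comp hx).eventually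
      ((tendsto_add_atTop_nat 1).eventually H), hx.eventually_ge_atTop 0, eventually_gt_atTop 0]
    with q hH hx0 hq p
  have hq' : (0 : ℝ) < q := Nat.cast_pos.2 hq
  obtain ⟨a, b, hne, hsmall, hcoeff⟩ := hH
  simp only [Function.comp_apply] at hsmall hcoeff
  set n := ⌊x q⌋₊ + 1 with hn
  have hxn : x q ≤ n := by
    rw [hn]
    exact_mod_cast (Nat.lt_floor_add_one (x q)).le
  have hnx : (n : ℝ) ≤ x q + 1 := by
    rw [hn]
    push_cast
    linarith [Nat.floor_le hx0]
  have hdist : 1 ≤ C' * Real.exp (mu * n) * |α - p / q| :=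
    one_le_mul_abs_sub_div hq hne
      (two_mul_mul_le_one_of_log_le hC hq' ((div_le_iff₀' hlam).1 hxn) hsmall) hcoeff
  rw [Real.rpow_neg hq'.le, ← mul_inv, inv_le_iff_one_le_mul₀' (by positivity)]
  calc 1 ≤ C' * Real.exp (mu * n) * |α - p / q| := hdist
    _ ≤ C' * (Real.exp mu * (2 * C * q) ^ (mu / lam)) * |α - p / q| := by
        gcongr
        exact exp_mul_le_of_le_log hmu (by positivity) hnx
    _ = C' * (Real.exp mu * (2 * C) ^ (mu / lam)) * (q : ℝ) ^ (mu / lam) * |α - p / q| := by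
        rw [Real.mul_rpow (by positivity) hq'.le]
        ring

end IrrationalityMeasure

section FejerKernel

open MeasureTheory Filter Topology Set

/-- The Fejér kernel of the real line, the cosine transform of the tent of half-width `T`. It is
normalised so that its total mass is `2 * π`. -/
noncomputable def fejerKernel (T w : ℝ) : ℝ :=
  ∫ t in (0 : ℝ)..T, 2 * (1 - t / T) * Real.cos (t * w)

variable {T w : ℝ}

lemma fejerKernel_eq (hT : 0 < T) (hw : w ≠ 0) :
    fejerKernel T w = 2 * (1 - Real.cos (T * w)) / (T * w ^ 2) := by
  have hderiv : ∀ t ∈ uIcc 0 T, HasDerivAt (fun t : ℝ => 2 * (1 - t / T) * Real.sin (t * w) / w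
      - 2 * Real.cos (t * w) / (T * w ^ 2)) (2 * (1 - t / T) * Real.cos (t * w)) t := by
    intro t _
    have h₁ : HasDerivAt (fun t : ℝ => t * w) w t := by simpa using (hasDerivAt_id t).mul_const w
    have h₂ : HasDerivAt (fun t : ℝ => 2 * (1 - t / T)) (2 * (-(1 / T))) t := by
      simpa using (((hasDerivAt_id t).div_const T).const_sub 1).const_mul 2
    refine (((h₂.mul h₁.sin).div_const w).sub
      ((h₁.cos.const_mul 2).div_const (T * w ^ 2))).congr_deriv ?_
    field_simp
    ring
  rw [fejerKernel, intervalIntegral.integral_eq_sub_of_hasDerivAt hderiv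
    (Continuous.intervalIntegrable (by fun_prop) _ _)]
  field_simp
  simp only [sub_self, mul_zero, zero_mul, zero_sub, sub_zero, Real.sin_zero, Real.cos_zero,
    sub_neg_eq_add]
  ring

lemma integral_two_mul_one_sub_div (hT : 0 < T) : ∫ t in (0 : ℝ)..T, 2 * (1 - t / T) = T := by
  rw [intervalIntegral.integral_const_mul, intervalIntegral.integral_sub (by simp) (by simp),
    intervalIntegral.integral_div, integral_id, intervalIntegral.integral_const, smul_eq_mul]
  field_simp
  ring

lemma fejerKernel_le (hT : 0 < T) : fejerKernel T w ≤ T := by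
  conv_rhs => rw [← integral_two_mul_one_sub_div hT]
  refine intervalIntegral.integral_mono_on hT.le (Continuous.intervalIntegrable (by fun_prop) _ _)
    (Continuous.intervalIntegrable (by fun_prop) _ _) fun t ht => ?_
  have htent : 0 ≤ 1 - t / T := sub_nonneg.2 ((div_le_one hT).2 ht.2)
  exact mul_le_of_le_one_right (by positivity) (Real.cos_le_one _)

lemma half_le_fejerKernel (hT : 0 < T) (hw : |w| ≤ 1 / T) : T / 2 ≤ fejerKernel T w := by
  have hhalf : T / 2 = ∫ t in (0 : ℝ)..T, 2 * (1 - t / T) * (1 / 2) := by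
    rw [intervalIntegral.integral_mul_const, integral_two_mul_one_sub_div hT, mul_one_div]
  rw [hhalf]
  refine intervalIntegral.integral_mono_on hT.le (Continuous.intervalIntegrable (by fun_prop) _ _)
    (Continuous.intervalIntegrable (by fun_prop) _ _) fun t ht => ?_
  have htent : 0 ≤ 1 - t / T := sub_nonneg.2 ((div_le_one hT).2 ht.2)
  have htw : |t * w| ≤ 1 := by
    calc |t * w| = t * |w| := by rw [abs_mul, abs_of_nonneg ht.1]
      _ ≤ T * (1 / T) := by gcongr; exact ht.2
      _ = 1 := mul_one_div_cancel hT.ne'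
  have hcos : 1 / 2 ≤ Real.cos (t * w) := by
    linarith [Real.one_sub_sq_div_two_le_cos (x := t * w), (sq_le_one_iff_abs_le_one _).2 htw]
  gcongr

lemma fejerKernel_nonneg (hT : 0 < T) : 0 ≤ fejerKernel T w := by
  rcases eq_or_ne w 0 with rfl | hw
  · exact (half_pos hT).le.trans (half_le_fejerKernel hT (by simp [hT.le]))
  · rw [fejerKernel_eq hT hw]
    have := Real.cos_le_one (T * w)
    exact div_nonneg (by linarith) (by positivity)

lemma fejerKernel_mul_sq_le (hT : 0 < T) : fejerKernel T w * w ^ 2 ≤ 4 / T := by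
  rcases eq_or_ne w 0 with rfl | hw
  · simp only [ne_eq, OfNat.ofNat_ne_zero, not_false_eq_true, zero_pow, mul_zero]
    positivity
  · calc fejerKernel T w * w ^ 2 = 2 * (1 - Real.cos (T * w)) / T := by
          rw [fejerKernel_eq hT hw]
          field_simp
      _ ≤ 4 / T := by
          gcongr
          linarith [Real.neg_one_le_cos (T * w)]

lemma continuous_fejerKernel : Continuous (fejerKernel T) := by
  unfold fejerKernel
  exact intervalIntegral.continuous_parametric_intervalIntegral_of_continuous' (by fun_prop) _ _

lemma integrable_fejerKernel (hT : 0 < T) : Integrable (fejerKernel T) := by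
  refine (integrable_inv_one_add_sq.const_mul (T + 4 / T)).mono'
    continuous_fejerKernel.aestronglyMeasurable (ae_of_all _ fun w => ?_)
  rw [Real.norm_of_nonneg (fejerKernel_nonneg hT), ← div_eq_mul_inv,
    le_div_iff₀ (by positivity)]
  linarith [fejerKernel_le (w := w) hT, fejerKernel_mul_sq_le (w := w) hT]

lemma fejerKernel_le_of_le_abs {h : ℝ} (hT : 0 < T) (hh : 0 < h) (hw : h ≤ |w|) :
    fejerKernel T w ≤ 4 / T * (1 + 1 / h ^ 2) * (1 + w ^ 2)⁻¹ := by
  have hhw : h ^ 2 ≤ w ^ 2 := by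
    rw [← sq_abs w]
    gcongr
  have hw2 : 0 < w ^ 2 := (by positivity : 0 < h ^ 2).trans_le hhw
  have hone : 1 + w ^ 2 ≤ (1 + 1 / h ^ 2) * w ^ 2 := by
    have : 1 ≤ w ^ 2 / h ^ 2 := (one_le_div (by positivity)).2 hhw
    linarith [show (1 + 1 / h ^ 2) * w ^ 2 = w ^ 2 + w ^ 2 / h ^ 2 by ring]
  rw [← div_eq_mul_inv, le_div_iff₀ (by positivity)]
  calc fejerKernel T w * (1 + w ^ 2)
      ≤ fejerKernel T w * ((1 + 1 / h ^ 2) * w ^ 2) :=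
        mul_le_mul_of_nonneg_left hone (fejerKernel_nonneg hT)
    _ = fejerKernel T w * w ^ 2 * (1 + 1 / h ^ 2) := by ring
    _ ≤ 4 / T * (1 + 1 / h ^ 2) := by
        gcongr
        exact fejerKernel_mul_sq_le hT

lemma indicator_sub_le_mul_fejerKernel {b C h η : ℝ} (hT : 0 < T) (hTh : 1 / T ≤ h) (hη : 0 ≤ η)
    (hbC : |b| ≤ C) (hb : |w| ≤ h → η ≤ b) :
    (Icc (-(1 / T)) (1 / T)).indicator (fun _ => η * (T / 2)) w
      - C * (4 / T * (1 + 1 / h ^ 2)) * (1 + w ^ 2)⁻¹ ≤ b * fejerKernel T w := by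
  have hh : 0 < h := (one_div_pos.2 hT).trans_le hTh
  have hC : 0 ≤ C := (abs_nonneg b).trans hbC
  have hK := fejerKernel_nonneg (w := w) hT
  have herror : 0 ≤ C * (4 / T * (1 + 1 / h ^ 2)) * (1 + w ^ 2)⁻¹ := by positivity
  by_cases hmem : w ∈ Icc (-(1 / T)) (1 / T)
  · rw [indicator_of_mem hmem]
    have hwT : |w| ≤ 1 / T := abs_le.2 hmem
    have hbη := hb (hwT.trans hTh)
    have : η * (T / 2) ≤ b * fejerKernel T w :=
      mul_le_mul hbη (half_le_fejerKernel hT hwT) (by positivity) (hη.trans hbη)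
    linarith
  rw [indicator_of_notMem hmem, zero_sub]
  rcases le_total |w| h with hwh | hwh
  · linarith [mul_nonneg (hη.trans (hb hwh)) hK]
  · have hneg : -(C * fejerKernel T w) ≤ b * fejerKernel T w := by
      rw [← neg_mul]
      exact mul_le_mul_of_nonneg_right (abs_le.1 hbC).1 hK
    have := mul_le_mul_of_nonneg_left (fejerKernel_le_of_le_abs hT hh hwh) hC
    linarith

lemma sub_le_integral_mul_fejerKernel {b : ℝ → ℝ} {C h η v : ℝ} (hT : 0 < T) (hTh : 1 / T ≤ h)
    (hη : 0 ≤ η) (hbm : Measurable b) (hbC : ∀ u, |b u| ≤ C)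
    (hb : ∀ u, |v - u| ≤ h → η ≤ b u) :
    η - C * (4 / T * (1 + 1 / h ^ 2)) * Real.pi ≤ ∫ u, b u * fejerKernel T (v - u) := by
  let f : ℝ → ℝ := fun w => (Icc (-(1 / T)) (1 / T)).indicator (fun _ => η * (T / 2)) w
    - C * (4 / T * (1 + 1 / h ^ 2)) * (1 + w ^ 2)⁻¹
  have hpeak : Integrable ((Icc (-(1 / T)) (1 / T)).indicator fun _ => η * (T / 2)) :=
    (integrable_indicator_iff measurableSet_Icc).2 (integrableOn_const (by simp))
  have htail : Integrable fun w : ℝ => C * (4 / T * (1 + 1 / h ^ 2)) * (1 + w ^ 2)⁻¹ :=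
    integrable_inv_one_add_sq.const_mul _
  have hf : ∫ u, f (v - u) = η - C * (4 / T * (1 + 1 / h ^ 2)) * Real.pi := by
    rw [integral_sub_left_eq_self f volume v, integral_sub hpeak htail,
      integral_indicator measurableSet_Icc, setIntegral_const, integral_const_mul,
      integral_univ_inv_one_add_sq, Real.volume_real_Icc_of_le (by linarith [one_div_pos.2 hT]),
      smul_eq_mul]
    field_simp
    ring
  rw [← hf]
  refine integral_mono ((hpeak.sub htail).comp_sub_left v)
    (((integrable_fejerKernel hT).comp_sub_left v).bdd_mul hbm.aestronglyMeasurable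
      (ae_of_all _ hbC)) fun u => ?_
  exact indicator_sub_le_mul_fejerKernel hT hTh hη (hbC u) (hb u)

end FejerKernel

section Tauberian

open MeasureTheory Filter Topology Set
open Complex (I)

variable {B : ℝ → ℝ} {C : ℝ} {G : ℂ → ℂ}

lemma integrableOn_mul_cexp_Ioi (hBm : Measurable B) (hBC : ∀ u, |B u| ≤ C) {z : ℂ}
    (hz : 0 < z.re) : IntegrableOn (fun u : ℝ => (B u : ℂ) * Complex.exp (-z * u)) (Ioi 0) :=
  (integrableOn_exp_mul_complex_Ioi (by simpa using hz) 0).bdd_mul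
    (Complex.measurable_ofReal.comp hBm).aestronglyMeasurable
    (ae_of_all _ fun u => by simpa using hBC u)

lemma re_cexp_mul_laplace (hBm : Measurable B) (hBC : ∀ u, |B u| ≤ C)
    (hG : ∀ z : ℂ, 0 < z.re → ∫ u in Ioi (0 : ℝ), (B u : ℂ) * Complex.exp (-z * u) = G z)
    {ε : ℝ} (hε : 0 < ε) (t v : ℝ) :
    (Complex.exp (t * v * I) * G (ε + t * I)).re
      = ∫ u in Ioi (0 : ℝ), B u * Real.exp (-ε * u) * Real.cos (t * (v - u)) := by
  have hz : 0 < (ε + t * I : ℂ).re := by simpa using hε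
  rw [← hG _ hz, ← integral_const_mul]
  refine (Complex.reCLM.integral_comp_comm
    ((integrableOn_mul_cexp_Ioi hBm hBC hz).const_mul _)).symm.trans ?_
  refine setIntegral_congr_fun measurableSet_Ioi fun u _ => ?_
  have hexp : Complex.exp (t * v * I) * (B u * Complex.exp (-(ε + t * I) * u))
      = ((B u * Real.exp (-ε * u) : ℝ) : ℂ) * Complex.exp ((t * (v - u) : ℝ) * I) := by
    push_cast
    rw [mul_left_comm, ← Complex.exp_add, mul_assoc (B u : ℂ), ← Complex.exp_add]
    congr 2
    ring
  rw [Complex.reCLM_apply, hexp, Complex.re_ofReal_mul, Complex.exp_ofReal_mul_I_re]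

lemma integral_tent_mul_re_laplace (hBm : Measurable B) (hBC : ∀ u, |B u| ≤ C)
    (hG : ∀ z : ℂ, 0 < z.re → ∫ u in Ioi (0 : ℝ), (B u : ℂ) * Complex.exp (-z * u) = G z)
    {T ε : ℝ} (hT : 0 < T) (hε : 0 < ε) (v : ℝ) :
    ∫ t in (0 : ℝ)..T, 2 * (1 - t / T) * (Complex.exp (t * v * I) * G (ε + t * I)).re
      = ∫ u in Ioi (0 : ℝ), B u * Real.exp (-ε * u) * fejerKernel T (v - u) := by
  have hdom : Integrable (fun z : ℝ × ℝ => 2 * C * Real.exp (-ε * z.2))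
      ((volume.restrict (Ioc 0 T)).prod (volume.restrict (Ioi 0))) :=
    (integrable_const (2 * C)).mul_prod (integrableOn_exp_mul_Ioi (by linarith) 0)
  simp_rw [re_cexp_mul_laplace hBm hBC hG hε, fejerKernel, ← integral_const_mul,
    intervalIntegral.integral_of_le hT.le, ← integral_const_mul]
  rw [integral_integral_swap]
  · simp_rw [mul_left_comm]
  refine hdom.mono' (Measurable.aestronglyMeasurable (by unfold Function.uncurry; fun_prop)) ?_
  rw [Measure.prod_restrict]
  filter_upwards [self_mem_ae_restrict (measurableSet_Ioc.prod measurableSet_Ioi)] with z hz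
  obtain ⟨⟨ht₀, htT⟩, -⟩ := hz
  have htent : |1 - z.1 / T| ≤ 1 :=
    abs_le.2 ⟨by linarith [(div_le_one hT).2 htT], by linarith [div_pos ht₀ hT]⟩
  have hC : 0 ≤ C := (abs_nonneg _).trans (hBC 0)
  simp only [Function.uncurry, norm_mul, Real.norm_eq_abs, Real.abs_exp, abs_two]
  calc 2 * |1 - z.1 / T| * (|B z.2| * Real.exp (-ε * z.2) * |Real.cos (z.1 * (v - z.2))|)
      ≤ 2 * 1 * (C * Real.exp (-ε * z.2) * 1) := by
        gcongr
        · exact hBC z.2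
        · exact Real.abs_cos_le_one _
    _ = 2 * C * Real.exp (-ε * z.2) := by ring

lemma tendsto_integral_mul_exp_mul_fejerKernel (hBm : Measurable B) (hBC : ∀ u, |B u| ≤ C)
    {T : ℝ} (hT : 0 < T) (v : ℝ) :
    Tendsto (fun ε : ℝ => ∫ u in Ioi (0 : ℝ), B u * Real.exp (-ε * u) * fejerKernel T (v - u))
      (𝓝[>] 0) (𝓝 (∫ u in Ioi (0 : ℝ), B u * fejerKernel T (v - u))) := by
  refine tendsto_integral_filter_of_dominated_convergence (fun u => C * fejerKernel T (v - u))
    (Eventually.of_forall fun ε => ?_) ?_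
    (((integrable_fejerKernel hT).comp_sub_left v).const_mul C).integrableOn
    (ae_of_all _ fun u => ?_)
  · have := (continuous_fejerKernel (T := T)).measurable
    exact Measurable.aestronglyMeasurable (by fun_prop)
  · filter_upwards [self_mem_nhdsWithin] with ε hε
    filter_upwards [self_mem_ae_restrict measurableSet_Ioi] with u hu
    have hexp : Real.exp (-ε * u) ≤ 1 := by
      rw [Real.exp_le_one_iff, neg_mul, neg_nonpos]
      exact (mul_pos hε hu).le
    have hK := fejerKernel_nonneg (w := v - u) hT
    rw [norm_mul, norm_mul, Real.norm_of_nonneg hK, Real.norm_eq_abs, Real.norm_eq_abs,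
      Real.abs_exp]
    gcongr
    exact (mul_le_of_le_one_right (abs_nonneg _) hexp).trans (hBC u)
  · have hcont : Continuous fun ε : ℝ => B u * Real.exp (-ε * u) * fejerKernel T (v - u) := by
      fun_prop
    simpa using (hcont.tendsto 0).mono_left (nhdsWithin_le_nhds (s := Ioi 0))

/-- Replacing `ε` by `max ε 0` makes the integrand continuous on the whole plane. -/
lemma tendsto_integral_tent_mul_re (hGc : ContinuousOn G {z | 0 ≤ z.re}) (T v : ℝ) :
    Tendsto (fun ε : ℝ => ∫ t in (0 : ℝ)..T,
        2 * (1 - t / T) * (Complex.exp (t * v * I) * G (ε + t * I)).re)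
      (𝓝[>] 0) (𝓝 (∫ t in (0 : ℝ)..T,
        2 * (1 - t / T) * (Complex.exp (t * v * I) * G (t * I)).re)) := by
  have hGc' : Continuous fun p : ℝ × ℝ => G ((max p.1 0 : ℝ) + p.2 * I) :=
    hGc.comp_continuous (by fun_prop) fun p => by simp
  have hcont : Continuous fun ε : ℝ => ∫ t in (0 : ℝ)..T,
      2 * (1 - t / T) * (Complex.exp (t * v * I) * G ((max ε 0 : ℝ) + t * I)).re :=
    intervalIntegral.continuous_parametric_intervalIntegral_of_continuous'
      (((by fun_prop : Continuous fun p : ℝ × ℝ => 2 * (1 - p.2 / T))).mul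
        (Complex.continuous_re.comp
          ((by fun_prop : Continuous fun p : ℝ × ℝ => Complex.exp (p.2 * v * I)).mul hGc'))) _ _
  have hlim := (hcont.tendsto 0).mono_left (nhdsWithin_le_nhds (s := Ioi 0))
  simp only [max_self, Complex.ofReal_zero, zero_add] at hlim
  refine hlim.congr' ?_
  filter_upwards [self_mem_nhdsWithin] with ε hε
  rw [max_eq_left (le_of_lt hε)]

lemma integral_tent_mul_re_eq_integral_mul_fejerKernel (hBm : Measurable B)
    (hBC : ∀ u, |B u| ≤ C) (hGc : ContinuousOn G {z | 0 ≤ z.re})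
    (hG : ∀ z : ℂ, 0 < z.re → ∫ u in Ioi (0 : ℝ), (B u : ℂ) * Complex.exp (-z * u) = G z)
    {T : ℝ} (hT : 0 < T) (v : ℝ) :
    ∫ t in (0 : ℝ)..T, 2 * (1 - t / T) * (Complex.exp (t * v * I) * G (t * I)).re
      = ∫ u in Ioi (0 : ℝ), B u * fejerKernel T (v - u) := by
  refine tendsto_nhds_unique (tendsto_integral_tent_mul_re hGc T v)
    ((tendsto_integral_mul_exp_mul_fejerKernel hBm hBC hT v).congr' ?_)
  filter_upwards [self_mem_nhdsWithin] with ε hε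
  exact (integral_tent_mul_re_laplace hBm hBC hG hT hε v).symm

lemma tendsto_setIntegral_mul_cexp_atTop (f : ℝ → ℂ) {s : Set ℝ} (hs : MeasurableSet s) :
    Tendsto (fun v : ℝ => ∫ t in s, f t * Complex.exp (t * v * I)) atTop (𝓝 0) := by
  have hcocompact : Tendsto (fun v : ℝ => -(v / (2 * Real.pi))) atTop (cocompact ℝ) :=
    (tendsto_neg_atTop_atBot.comp (tendsto_id.atTop_div_const (by positivity))).mono_right
      atBot_le_cocompact
  refine ((Real.tendsto_integral_exp_smul_cocompact (s.indicator f)).comp hcocompact).congr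
    fun v => ?_
  rw [← integral_indicator hs]
  refine integral_congr_ae (ae_of_all _ fun t => ?_)
  by_cases ht : t ∈ s
  · have hπ : (Real.pi : ℂ) ≠ 0 := Complex.ofReal_ne_zero.2 Real.pi_ne_zero
    simp only [indicator_of_mem ht, Circle.smul_def, Real.fourierChar_apply, smul_eq_mul]
    rw [mul_comm]
    congr 2
    push_cast
    field_simp
  · simp only [indicator_of_notMem ht, smul_zero]

lemma tendsto_integral_mul_fejerKernel_atTop (hBm : Measurable B)
    (hBC : ∀ u, |B u| ≤ C) (hGc : ContinuousOn G {z | 0 ≤ z.re})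
    (hG : ∀ z : ℂ, 0 < z.re → ∫ u in Ioi (0 : ℝ), (B u : ℂ) * Complex.exp (-z * u) = G z)
    {T : ℝ} (hT : 0 < T) :
    Tendsto (fun v => ∫ u in Ioi (0 : ℝ), B u * fejerKernel T (v - u)) atTop (𝓝 0) := by
  have hGc' : Continuous fun t : ℝ => G (t * I) :=
    hGc.comp_continuous (by fun_prop) fun t => by simp
  have hRL := (Complex.continuous_re.tendsto _).comp
    (tendsto_setIntegral_mul_cexp_atTop (fun t => ((2 * (1 - t / T) : ℝ) : ℂ) * G (t * I))
      (measurableSet_Ioc (a := 0) (b := T)))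
  rw [Complex.zero_re] at hRL
  refine hRL.congr fun v => ?_
  rw [← integral_tent_mul_re_eq_integral_mul_fejerKernel hBm hBC hGc hG hT v, Function.comp_apply,
    ← intervalIntegral.integral_of_le hT.le]
  have hcont : Continuous fun t : ℝ =>
      ((2 * (1 - t / T) : ℝ) : ℂ) * G (t * I) * Complex.exp (t * v * I) :=
    ((by fun_prop : Continuous fun t : ℝ => ((2 * (1 - t / T) : ℝ) : ℂ)).mul hGc').mul
      (by fun_prop)
  refine (Complex.reCLM.intervalIntegral_comp_comm (hcont.intervalIntegrable _ _)).symm.trans ?_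
  refine intervalIntegral.integral_congr fun t _ => ?_
  simp only [Complex.reCLM_apply]
  rw [mul_assoc, Complex.re_ofReal_mul, mul_comm (G _)]

lemma eventually_exists_lt_of_tendsto_integral_mul_fejerKernel (hBm : Measurable B)
    (hBC : ∀ u, |B u| ≤ C)
    (hlim : ∀ T > 0, Tendsto (fun v => ∫ u in Ioi (0 : ℝ), B u * fejerKernel T (v - u))
      atTop (𝓝 0)) {η h : ℝ} (hη : 0 < η) (hh : 0 < h) :
    ∀ᶠ v in atTop, ∃ u, |v - u| ≤ h ∧ B u < η := by
  obtain ⟨T, ⟨hTh, hTη⟩, hT⟩ : ∃ T : ℝ, (1 / T < h ∧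
      C * (4 / T * (1 + 1 / h ^ 2)) * Real.pi < η / 2) ∧ 0 < T := by
    have hinv : Tendsto (fun T : ℝ => 1 / T) atTop (𝓝 0) := by
      simpa using tendsto_inv_atTop_zero (𝕜 := ℝ)
    have herror : Tendsto (fun T : ℝ => C * (4 / T * (1 + 1 / h ^ 2)) * Real.pi) atTop (𝓝 0) := by
      have := hinv.const_mul (C * 4 * (1 + 1 / h ^ 2) * Real.pi)
      rw [mul_zero] at this
      exact this.congr fun T => by ring
    exact (((hinv.eventually_lt_const hh).and (herror.eventually_lt_const (half_pos hη))).and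
      (eventually_gt_atTop 0)).exists
  filter_upwards [(hlim T hT).eventually_lt_const (half_pos hη), eventually_gt_atTop h]
    with v hsmall hv
  by_contra! hlarge
  have hC : 0 ≤ C := (abs_nonneg _).trans (hBC 0)
  have hlower := sub_le_integral_mul_fejerKernel hT hTh.le hη.le
    (hBm.indicator measurableSet_Ioi) (b := (Ioi 0).indicator B) (C := C) (h := h) (v := v)
    (fun u => ?_) (fun u hu => ?_)
  · simp_rw [← indicator_mul_left (Ioi 0) B fun u => fejerKernel T (v - u)] at hlower
    rw [integral_indicator measurableSet_Ioi] at hlower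
    linarith
  · by_cases hu : u ∈ Ioi (0 : ℝ) <;> simp [hu, hBC u, hC]
  · have hu₀ : u ∈ Ioi (0 : ℝ) := by
      have := (abs_le.1 hu).2
      exact mem_Ioi.2 (by linarith)
    rw [indicator_of_mem hu₀]
    exact hlarge u hu

/-- Ingham's Tauberian theorem: integrating the boundary values of the Laplace transform against
the Fejér kernel shows that local averages of `B` tend to `0`, and slow decrease passes this on to
`B` itself. -/
theorem tendsto_zero_of_continuousOn_laplace (hBm : Measurable B)
    (hBC : ∀ u, |B u| ≤ C) (hGc : ContinuousOn G {z | 0 ≤ z.re})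
    (hG : ∀ z : ℂ, 0 < z.re → ∫ u in Ioi (0 : ℝ), (B u : ℂ) * Complex.exp (-z * u) = G z)
    (hslow : ∀ ε > 0, ∃ h > 0, ∀ u v, u ≤ v → v ≤ u + h → B u - ε ≤ B v) :
    Tendsto B atTop (𝓝 0) := by
  have hlim : ∀ T > 0, Tendsto (fun v => ∫ u in Ioi (0 : ℝ), B u * fejerKernel T (v - u))
      atTop (𝓝 0) := fun T hT => tendsto_integral_mul_fejerKernel_atTop hBm hBC hGc hG hT
  have hlim_neg : ∀ T > 0, Tendsto (fun v => ∫ u in Ioi (0 : ℝ), -B u * fejerKernel T (v - u))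
      atTop (𝓝 0) := fun T hT => by
    simpa only [neg_mul, integral_neg, neg_zero] using (hlim T hT).neg
  refine tendsto_order.2 ⟨fun a ha => ?_, fun a ha => ?_⟩
  · obtain ⟨h, hh, hslow⟩ := hslow (-a / 2) (by linarith)
    have hleft := (tendsto_atTop_add_const_right atTop (-(h / 2)) tendsto_id).eventually
      (eventually_exists_lt_of_tendsto_integral_mul_fejerKernel hBm.neg
        (by simpa only [Pi.neg_apply, abs_neg] using hBC) hlim_neg
        (show 0 < -a / 2 by linarith) (half_pos hh))
    filter_upwards [hleft] with v ⟨u, hu, hBu⟩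
    obtain ⟨hu₁, hu₂⟩ := abs_le.1 hu
    simp only [id, Pi.neg_apply] at hu₁ hu₂ hBu
    linarith [hslow u v (by linarith) (by linarith)]
  · obtain ⟨h, hh, hslow⟩ := hslow (a / 2) (half_pos ha)
    have hright := (tendsto_atTop_add_const_right atTop (h / 2) tendsto_id).eventually
      (eventually_exists_lt_of_tendsto_integral_mul_fejerKernel hBm hBC hlim (half_pos ha)
        (half_pos hh))
    filter_upwards [hright] with v ⟨u, hu, hBu⟩
    obtain ⟨hu₁, hu₂⟩ := abs_le.1 hu
    simp only [id] at hu₁ hu₂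
    linarith [hslow v u (by linarith) (by linarith)]

end Tauberian

section PrimeNumberTheorem

open MeasureTheory Filter Topology Set
open ArithmeticFunction (vonMangoldt)
open Chebyshev (psi theta)

lemma setIntegral_Ioi_one_mul_cpow (F : ℝ → ℂ) (s : ℂ) :
    ∫ x in Ioi (1 : ℝ), F x * (x : ℂ) ^ (-(s + 1))
      = ∫ u in Ioi (0 : ℝ), F (Real.exp u) * Complex.exp (-s * u) := by
  have himage : Real.exp '' Ioi 0 = Ioi 1 := by
    simp
  rw [← himage, integral_image_eq_integral_abs_deriv_smul measurableSet_Ioi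
    (fun x _ => (Real.hasDerivAt_exp x).hasDerivWithinAt) Real.exp_injective.injOn]
  refine setIntegral_congr_fun measurableSet_Ioi fun u _ => ?_
  have hne : (Real.exp u : ℂ) ≠ 0 := Complex.ofReal_ne_zero.2 (Real.exp_pos u).ne'
  have hcpow : (Real.exp u : ℂ) ^ (-(s + 1)) = Complex.exp (-(s + 1) * u) := by
    rw [Complex.cpow_def_of_ne_zero hne, ← Complex.ofReal_log (Real.exp_pos u).le,
      Real.log_exp, mul_comm]
  simp only [abs_of_pos (Real.exp_pos u), Complex.real_smul, hcpow]
  rw [Complex.ofReal_exp, mul_left_comm, ← Complex.exp_add]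
  congr 2
  ring

lemma LSeries_vonMangoldt_eq {s : ℂ} (hs : 1 < s.re) :
    LSeries (fun n => (vonMangoldt n : ℂ)) s
      = vonMangoldt.LFunctionResidueClassAux (1 : ZMod 1) s + 1 / (s - 1) := by
  have hclass : vonMangoldt.residueClass (1 : ZMod 1) = vonMangoldt := by
    ext n
    have hmem : n ∈ {n : ℕ | (n : ZMod 1) = 1} := Subsingleton.elim _ _
    exact indicator_of_mem hmem _
  have haux := vonMangoldt.eqOn_LFunctionResidueClassAux (q := 1) (a := 1) isUnit_one hs
  simp only [hclass, Nat.totient_one, Nat.cast_one, inv_one] at haux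
  rw [haux, sub_add_cancel]

lemma LSeries_vonMangoldt_eq_mul_integral_psi {s : ℂ} (hs : 1 < s.re) :
    LSeries (fun n => (vonMangoldt n : ℂ)) s
      = s * ∫ x in Ioi (1 : ℝ), (psi x : ℂ) * (x : ℂ) ^ (-(s + 1)) := by
  have hO : (fun n : ℕ ↦ ∑ k ∈ Finset.Icc 1 n, vonMangoldt k)
      =O[atTop] fun n ↦ (n : ℝ) ^ (1 : ℝ) := by
    refine Asymptotics.IsBigO.of_bound (Real.log 4 + 4) (Eventually.of_forall fun n => ?_)
    have hpsi := Chebyshev.psi_le_const_mul_self (Nat.cast_nonneg (α := ℝ) n)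
    rw [Chebyshev.psi, Nat.floor_natCast] at hpsi
    rwa [Real.rpow_one, Real.norm_natCast, Real.norm_of_nonneg
      (Finset.sum_nonneg fun _ _ => ArithmeticFunction.vonMangoldt_nonneg)]
  rw [LSeries_eq_mul_integral_of_nonneg (fun n => vonMangoldt n) zero_le_one hs hO
    fun n => ArithmeticFunction.vonMangoldt_nonneg]
  simp only [Chebyshev.psi, Complex.ofReal_sum]
  rfl

/-- `exp (-u) * ψ (exp u)`, the Chebyshev function `ψ(x) / x` on a logarithmic scale; its Laplace
transform is the Dirichlet series of the von Mangoldt function. -/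
noncomputable def normalizedPsi (u : ℝ) : ℝ := Real.exp (-u) * psi (Real.exp u)

lemma normalizedPsi_nonneg (u : ℝ) : 0 ≤ normalizedPsi u :=
  mul_nonneg (Real.exp_pos _).le (Chebyshev.psi_nonneg _)

lemma normalizedPsi_le (u : ℝ) : normalizedPsi u ≤ Real.log 4 + 4 := by
  calc normalizedPsi u ≤ Real.exp (-u) * ((Real.log 4 + 4) * Real.exp u) := by
        unfold normalizedPsi
        gcongr
        exact Chebyshev.psi_le_const_mul_self (Real.exp_pos u).le
    _ = Real.log 4 + 4 := by
        rw [Real.exp_neg]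
        field_simp

lemma abs_normalizedPsi_le (u : ℝ) : |normalizedPsi u| ≤ Real.log 4 + 4 := by
  rw [abs_of_nonneg (normalizedPsi_nonneg u)]
  exact normalizedPsi_le u

lemma abs_normalizedPsi_sub_one_le (u : ℝ) : |normalizedPsi u - 1| ≤ Real.log 4 + 4 := by
  have hlog : 0 ≤ Real.log 4 := Real.log_nonneg (by norm_num)
  exact abs_le.2 ⟨by linarith [normalizedPsi_nonneg u], by linarith [normalizedPsi_le u]⟩

lemma measurable_normalizedPsi : Measurable normalizedPsi :=
  (Real.measurable_exp.comp measurable_neg).mul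
    (Chebyshev.psi_mono.measurable.comp Real.measurable_exp)

lemma integral_normalizedPsi_sub_one_mul_cexp {z : ℂ} (hz : 0 < z.re) :
    ∫ u in Ioi (0 : ℝ), ((normalizedPsi u - 1 : ℝ) : ℂ) * Complex.exp (-z * u)
      = (vonMangoldt.LFunctionResidueClassAux (1 : ZMod 1) (z + 1) - 1) / (z + 1) := by
  have hz₀ : z ≠ 0 := by
    rintro rfl
    simp at hz
  have hz₁ : z + 1 ≠ 0 := by
    intro h
    have := congrArg Complex.re h
    simp only [Complex.add_re, Complex.one_re, Complex.zero_re] at this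
    linarith
  have hpsi : (z + 1) * ∫ u in Ioi (0 : ℝ), (normalizedPsi u : ℂ) * Complex.exp (-z * u)
      = vonMangoldt.LFunctionResidueClassAux (1 : ZMod 1) (z + 1) + 1 / z := by
    have hre : 1 < (z + 1).re := by simpa using hz
    have hLSeries := LSeries_vonMangoldt_eq_mul_integral_psi hre
    rw [LSeries_vonMangoldt_eq hre, add_sub_cancel_right,
      setIntegral_Ioi_one_mul_cpow fun x => (psi x : ℂ)] at hLSeries
    rw [hLSeries]
    congr 2 with u
    rw [normalizedPsi, Complex.ofReal_mul, Complex.ofReal_exp, mul_comm (Complex.exp _), mul_assoc,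
      ← Complex.exp_add]
    congr 2
    push_cast
    ring
  have hexp : ∫ u in Ioi (0 : ℝ), Complex.exp (-z * u) = 1 / z := by
    rw [integral_exp_mul_complex_Ioi (by simpa using hz)]
    simp only [Complex.ofReal_zero, mul_zero, Complex.exp_zero, neg_div_neg_eq]
  simp_rw [Complex.ofReal_sub, Complex.ofReal_one, sub_mul, one_mul]
  rw [integral_sub (integrableOn_mul_cexp_Ioi measurable_normalizedPsi abs_normalizedPsi_le hz)
    (integrableOn_exp_mul_complex_Ioi (by simpa using hz) 0), hexp, eq_div_iff hz₁,
    mul_comm, mul_sub, hpsi, add_mul, mul_one_div_cancel hz₀]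
  ring

lemma normalizedPsi_sub_le {u v : ℝ} (huv : u ≤ v) :
    normalizedPsi u - (Real.log 4 + 4) * (v - u) ≤ normalizedPsi v := by
  have hmono : normalizedPsi u * Real.exp (-(v - u)) ≤ normalizedPsi v := by
    calc normalizedPsi u * Real.exp (-(v - u)) = Real.exp (-v) * psi (Real.exp u) := by
          rw [normalizedPsi, mul_right_comm, ← Real.exp_add]
          congr 2
          ring
      _ ≤ normalizedPsi v := by
          unfold normalizedPsi
          gcongr
  have hexp : normalizedPsi u * (1 - (v - u)) ≤ normalizedPsi u * Real.exp (-(v - u)) :=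
    mul_le_mul_of_nonneg_left (Real.one_sub_le_exp_neg _) (normalizedPsi_nonneg u)
  have hbound : normalizedPsi u * (v - u) ≤ (Real.log 4 + 4) * (v - u) :=
    mul_le_mul_of_nonneg_right (normalizedPsi_le u) (sub_nonneg.2 huv)
  linarith

theorem tendsto_normalizedPsi : Tendsto normalizedPsi atTop (𝓝 1) := by
  have hcont : ContinuousOn (fun z : ℂ =>
      (vonMangoldt.LFunctionResidueClassAux (1 : ZMod 1) (z + 1) - 1) / (z + 1))
      {z | 0 ≤ z.re} := by
    have hmaps : MapsTo (fun z : ℂ => z + 1) {z | 0 ≤ z.re} {s | 1 ≤ s.re} :=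
      fun z hz => by simpa using hz
    refine (((vonMangoldt.continuousOn_LFunctionResidueClassAux (1 : ZMod 1)).comp
      (by fun_prop) hmaps).sub continuousOn_const).div (by fun_prop) fun z hz h => ?_
    have hre : 1 ≤ (z + 1).re := hmaps hz
    rw [h, Complex.zero_re] at hre
    linarith
  have hC : 0 < Real.log 4 + 4 := by
    have := Real.log_nonneg (show (1 : ℝ) ≤ 4 by norm_num)
    linarith
  have hzero := tendsto_zero_of_continuousOn_laplace (measurable_normalizedPsi.sub_const 1)
    abs_normalizedPsi_sub_one_le hcont (fun z hz => integral_normalizedPsi_sub_one_mul_cexp hz)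
    fun ε hε => ⟨ε / (Real.log 4 + 4), by positivity, fun u v huv hvu => by
      have : (Real.log 4 + 4) * (v - u) ≤ ε := (le_div_iff₀' hC).1 (by linarith)
      linarith [normalizedPsi_sub_le huv]⟩
  simpa using hzero.add_const 1

theorem tendsto_psi_div_self : Tendsto (fun x => psi x / x) atTop (𝓝 1) := by
  refine (tendsto_normalizedPsi.comp Real.tendsto_log_atTop).congr' ?_
  filter_upwards [eventually_gt_atTop 0] with x hx
  rw [Function.comp_apply, normalizedPsi, Real.exp_neg, Real.exp_log hx, inv_mul_eq_div]

theorem tendsto_theta_div_self : Tendsto (fun x => theta x / x) atTop (𝓝 1) := by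
  have hsqrt : (Real.sqrt : ℝ → ℝ) =o[atTop] (fun x : ℝ => x) := by
    refine (Asymptotics.isLittleO_iff_tendsto' ?_).2 ?_
    · filter_upwards [eventually_ne_atTop 0] with x hx hx₀
      exact absurd hx₀ hx
    · simpa only [Real.sqrt_div_self', one_div, Function.comp_def] using
        tendsto_inv_atTop_zero.comp Real.tendsto_sqrt_atTop
  have hdiff := (Chebyshev.isBigO_psi_sub_theta_sqrt.trans_isLittleO hsqrt).tendsto_div_nhds_zero
  have hsub := tendsto_psi_div_self.sub hdiff
  rw [sub_zero] at hsub
  refine hsub.congr fun x => ?_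
  rw [Pi.sub_apply, ← sub_div, sub_sub_cancel]

end PrimeNumberTheorem

section ReducedLcm

open Chebyshev Filter Topology

lemma mod_le_mod_of_not_dvd_choose {p n i : ℕ} (hp : p.Prime) (h : ¬ p ∣ n.choose i) :
    i % p ≤ n % p := by
  have := Fact.mk hp
  contrapose! h
  have hlucas := Choose.choose_modEq_choose_mod_mul_choose_div_nat (p := p) (n := n) (k := i)
  rw [Nat.choose_eq_zero_of_lt h, zero_mul] at hlucas
  exact (Nat.modEq_zero_iff_dvd).1 hlucas

/-- By Lucas' theorem `i % p` and `j % p` are at most `N % p`, too small to add up to `M % p`. -/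
lemma dvd_choose_mul_choose_of_modEq {p N M i j : ℕ} (hp : p.Prime) (h : 2 * (N % p) < M % p)
    (hij : i + j ≡ M [MOD p]) : p ∣ N.choose i * N.choose j := by
  by_contra hndvd
  have hi := mod_le_mod_of_not_dvd_choose hp fun hi => hndvd (hi.mul_right _)
  have hj := mod_le_mod_of_not_dvd_choose hp fun hj => hndvd (hj.mul_left _)
  have hlt : i % p + j % p < p := by
    have := Nat.mod_lt M hp.pos
    omega
  rw [Nat.ModEq, Nat.add_mod, Nat.mod_eq_of_lt hlt] at hij
  omega

/-- The primes whose single contribution to `lcm (1, …, 2N - M)` is already supplied by the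
products `C(N, i) C(N, j)` with `p ∣ i + j - M`. The condition `2N - M < p²` ensures that `p²`
does not divide the least common multiple. -/
def savedPrimes (N M : ℕ) : Finset ℕ :=
  {p ∈ Nat.primesLE (2 * N - M) | 2 * (N % p) < M % p ∧ 2 * N - M < p ^ 2}

/-- The least common multiple of `1, …, 2N - M` with the primes of `savedPrimes N M` removed:
a common denominator for the numbers `C(N, i) C(N, j) / (i + j - M)`. -/
def reducedLcm (N M : ℕ) : ℕ :=
  ∏ p ∈ Nat.primesLE (2 * N - M) \ savedPrimes N M, p ^ p.log (2 * N - M)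

lemma reducedLcm_pos (N M : ℕ) : 0 < reducedLcm N M :=
  Finset.prod_pos fun _ hp =>
    pow_pos (Nat.mem_primesLE.1 (Finset.mem_sdiff.1 hp).1).2.pos _

lemma dvd_reducedLcm_mul {N M i j k : ℕ} (hk : k ≠ 0) (hkle : k ≤ 2 * N - M)
    (hij : i + j ≡ M [MOD k]) : k ∣ reducedLcm N M * (N.choose i * N.choose j) := by
  refine (Nat.dvd_iff_prime_pow_dvd_dvd _ _).2 fun p r hp hpr => ?_
  rcases r.eq_zero_or_pos with rfl | hr
  · simp
  have hpow : p ^ r ≤ 2 * N - M := (Nat.le_of_dvd (Nat.pos_of_ne_zero hk) hpr).trans hkle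
  have hp_mem : p ∈ Nat.primesLE (2 * N - M) :=
    Nat.mem_primesLE.2 ⟨(Nat.le_self_pow hr.ne' p).trans hpow, hp⟩
  by_cases hsaved : p ∈ savedPrimes N M
  · obtain ⟨-, hmod, hsq⟩ := Finset.mem_filter.1 hsaved
    obtain rfl : r = 1 := by
      have : r < 2 := (Nat.pow_lt_pow_iff_right hp.one_lt).1 (hpow.trans_lt hsq)
      omega
    rw [pow_one] at hpr ⊢
    exact (dvd_choose_mul_choose_of_modEq hp hmod (hij.of_dvd hpr)).mul_left _
  · refine Dvd.dvd.mul_right ?_ _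
    exact (pow_dvd_pow p (Nat.le_log_of_pow_le hp.one_lt hpow)).trans
      (Finset.dvd_prod_of_mem (fun p => p ^ p.log (2 * N - M))
        (Finset.mem_sdiff.2 ⟨hp_mem, hsaved⟩))

lemma log_reducedLcm (N M : ℕ) : Real.log (reducedLcm N M) =
    psi ((2 * N - M : ℕ) : ℝ) - ∑ p ∈ savedPrimes N M, Real.log p := by
  have hsub : savedPrimes N M ⊆ Nat.primesLE (2 * N - M) := Finset.filter_subset _ _
  have hsaved : ∑ p ∈ savedPrimes N M, (p.log (2 * N - M) : ℝ) * Real.log p =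
      ∑ p ∈ savedPrimes N M, Real.log p := by
    refine Finset.sum_congr rfl fun p hp => ?_
    obtain ⟨hp_mem, -, hsq⟩ := Finset.mem_filter.1 hp
    have hlog : p.log (2 * N - M) = 1 :=
      (Nat.log_eq_one_iff').2 ⟨(Nat.mem_primesLE.1 hp_mem).1, by rwa [← sq]⟩
    rw [hlog, Nat.cast_one, one_mul]
  rw [psi_eq_sum_mul_log_prime, ← Finset.sum_sdiff hsub, hsaved, add_sub_cancel_right, reducedLcm,
    Nat.cast_prod, Real.log_prod]
  · simp only [Nat.cast_pow, Real.log_pow]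
  · intro p hp
    exact_mod_cast (pow_pos (Nat.mem_primesLE.1 (Finset.mem_sdiff.1 hp).1).2.pos _).ne'

lemma div_eq_and_two_mul_mod_lt {N M u f p : ℕ} (hu : u * p ≤ N) (hf : f * p ≤ M)
    (hf' : M < (f + 1) * p) (h : 2 * N + f * p < 2 * (u * p) + M) :
    N / p = u ∧ 2 * (N % p) < M % p := by
  have hM : M / p = f := Nat.div_eq_of_lt_le hf hf'
  have hN : N / p = u := by
    refine Nat.div_eq_of_lt_le hu ?_
    rw [add_mul, one_mul] at hf' ⊢
    omega
  have hNmod := Nat.mod_add_div N p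
  have hMmod := Nat.mod_add_div M p
  rw [hN, mul_comm p] at hNmod
  rw [hM, mul_comm p] at hMmod
  exact ⟨hN, by omega⟩

/-- For `N = a m` and `M = b m`, the primes `p` in `(windowStart a b u * m, (a / u) * m]` satisfy
`⌊N / p⌋ = u` and `⌊M / p⌋ = f := ⌊b u / a⌋`. The two terms of the maximum encode `M < (f + 1) p`
and `2 (N - u p) < M - f p`. -/
noncomputable def windowStart (a b u : ℕ) : ℝ :=
  max (b / (b * u / a + 1 : ℕ)) ((2 * a - b) / (2 * u - (b * u / a : ℕ)))

/-- The primes in the interval `(windowStart a b u * m, (a / u) * m]`. -/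
noncomputable def windowPrimes (a b u m : ℕ) : Finset ℕ :=
  {p ∈ Finset.Ioc ⌊windowStart a b u * m⌋₊ ⌊(a / u : ℝ) * m⌋₊ | p.Prime}

lemma two_mul_sub_floor_pos {a b u : ℕ} (hba : b ≤ a) (hu : 0 < u) :
    (0 : ℝ) < 2 * u - (b * u / a : ℕ) := by
  have hle : b * u / a ≤ u := Nat.div_le_of_le_mul (Nat.mul_le_mul_right u hba)
  have hle' : ((b * u / a : ℕ) : ℝ) ≤ u := by exact_mod_cast hle
  have : (0 : ℝ) < u := Nat.cast_pos.2 hu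
  linarith

lemma windowStart_pos {a b u : ℕ} (ha : 0 < a) (hba : b ≤ a) (hu : 0 < u) :
    0 < windowStart a b u := by
  have ha' : (0 : ℝ) < a := Nat.cast_pos.2 ha
  have hba' : (b : ℝ) ≤ a := Nat.cast_le.2 hba
  exact lt_max_of_lt_right (div_pos (by linarith) (two_mul_sub_floor_pos hba hu))

lemma mem_windowPrimes_iff {a b u m p : ℕ} (ha : 0 < a) (hba : b ≤ a) (hu : 0 < u) :
    p ∈ windowPrimes a b u m ↔ (b * m < (b * u / a + 1) * p ∧
      2 * (a * m) + b * u / a * p < 2 * (u * p) + b * m) ∧ u * p ≤ a * m ∧ p.Prime := by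
  have hu' : (0 : ℝ) < u := Nat.cast_pos.2 hu
  have hwidth := two_mul_sub_floor_pos hba hu
  have hstart := windowStart_pos ha hba hu
  have hupper : p ≤ ⌊(a / u : ℝ) * m⌋₊ ↔ u * p ≤ a * m := by
    rw [Nat.le_floor_iff (by positivity), div_mul_eq_mul_div, le_div_iff₀' hu']
    exact_mod_cast Iff.rfl
  have hlower : ⌊windowStart a b u * m⌋₊ < p ↔ b * m < (b * u / a + 1) * p ∧
      2 * (a * m) + b * u / a * p < 2 * (u * p) + b * m := by
    rw [Nat.floor_lt (by positivity), windowStart, max_mul_of_nonneg _ _ m.cast_nonneg, max_lt_iff,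
      div_mul_eq_mul_div, div_lt_iff₀' (by positivity), div_mul_eq_mul_div, div_lt_iff₀' hwidth]
    refine and_congr (by exact_mod_cast Iff.rfl) ?_
    rw [← Nat.cast_lt (α := ℝ)]
    push_cast [-Nat.cast_div_charZero]
    constructor <;> intro h <;> linarith
  rw [windowPrimes, Finset.mem_filter, Finset.mem_Ioc, hlower, hupper, and_assoc]

lemma div_eq_and_two_mul_mod_lt_of_mem_windowPrimes {a b u m p : ℕ} (ha : 0 < a) (hba : b ≤ a)
    (hu : 0 < u) (hp : p ∈ windowPrimes a b u m) :
    a * m / p = u ∧ 2 * (a * m % p) < b * m % p := by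
  obtain ⟨⟨hfloor, hlower⟩, hupper, -⟩ := (mem_windowPrimes_iff ha hba hu).1 hp
  refine div_eq_and_two_mul_mod_lt hupper (Nat.le_of_mul_le_mul_left ?_ ha) hfloor hlower
  calc a * (b * u / a * p) = b * u / a * a * p := by ring
    _ ≤ b * u * p := Nat.mul_le_mul_right p (Nat.div_mul_le_self _ _)
    _ = b * (u * p) := by ring
    _ ≤ b * (a * m) := by gcongr
    _ = a * (b * m) := by ring

lemma windowPrimes_subset_savedPrimes {a b u m K : ℕ} (ha : 0 < a) (hba : b ≤ a) (hu : 0 < u)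
    (huK : u ≤ K) (hm : 4 * K ^ 2 ≤ m) :
    windowPrimes a b u m ⊆ savedPrimes (a * m) (b * m) := by
  intro p hp
  obtain ⟨⟨-, hlower⟩, hupper, hprime⟩ := (mem_windowPrimes_iff ha hba hu).1 hp
  have hbm : b * m ≤ a * m := Nat.mul_le_mul_right m hba
  have hmam : m ≤ a * m := Nat.le_mul_of_pos_left m ha
  have hlt : 2 * (a * m) - b * m < 2 * K * p := by
    have hup : u * p ≤ K * p := Nat.mul_le_mul_right p huK
    rw [mul_assoc]
    omega
  have hKp : 2 * K < p := by
    refine lt_of_mul_lt_mul_left' (a := 2 * K) ?_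
    calc 2 * K * (2 * K) = 4 * K ^ 2 := by ring
      _ ≤ 2 * (a * m) - b * m := by omega
      _ < 2 * K * p := hlt
  have hle : p ≤ u * p := Nat.le_mul_of_pos_left p hu
  refine Finset.mem_filter.2 ⟨Nat.mem_primesLE.2 ⟨by omega, hprime⟩,
    (div_eq_and_two_mul_mod_lt_of_mem_windowPrimes ha hba hu hp).2, hlt.trans_le ?_⟩
  rw [sq]
  gcongr

lemma theta_sub_theta_le (x y : ℝ) :
    theta y - theta x ≤ ∑ p ∈ Finset.Ioc ⌊x⌋₊ ⌊y⌋₊ with p.Prime, Real.log p := by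
  rcases le_total x y with hxy | hyx
  · rw [theta, theta, Finset.sum_filter, Finset.sum_filter, Finset.sum_filter,
      ← Finset.sum_Ioc_consecutive _ (Nat.zero_le _) (Nat.floor_mono hxy), add_sub_cancel_left]
  · exact (sub_nonpos.2 (theta_mono hyx)).trans
      (Finset.sum_nonneg fun p _ => Real.log_natCast_nonneg p)

lemma sum_theta_sub_theta_le {a b K m : ℕ} (ha : 0 < a) (hba : b ≤ a) (hm : 4 * K ^ 2 ≤ m) :
    ∑ u ∈ Finset.Icc 1 K, (theta (a / u * m) - theta (windowStart a b u * m)) ≤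
      ∑ p ∈ savedPrimes (a * m) (b * m), Real.log p := by
  have hdisjoint : (Finset.Icc 1 K : Set ℕ).PairwiseDisjoint (windowPrimes a b · m) := by
    intro u hu v hv huv
    rw [Finset.coe_Icc, Set.mem_Icc] at hu hv
    refine Finset.disjoint_left.2 fun p hpu hpv => huv ?_
    rw [← (div_eq_and_two_mul_mod_lt_of_mem_windowPrimes ha hba hu.1 hpu).1,
      (div_eq_and_two_mul_mod_lt_of_mem_windowPrimes ha hba hv.1 hpv).1]
  calc ∑ u ∈ Finset.Icc 1 K, (theta (a / u * m) - theta (windowStart a b u * m))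
      ≤ ∑ u ∈ Finset.Icc 1 K, ∑ p ∈ windowPrimes a b u m, Real.log p :=
        Finset.sum_le_sum fun u _ => theta_sub_theta_le _ _
    _ = ∑ p ∈ (Finset.Icc 1 K).biUnion (windowPrimes a b · m), Real.log p :=
        (Finset.sum_biUnion hdisjoint).symm
    _ ≤ ∑ p ∈ savedPrimes (a * m) (b * m), Real.log p := by
        refine Finset.sum_le_sum_of_subset_of_nonneg (Finset.biUnion_subset.2 fun u hu => ?_)
          fun p _ _ => Real.log_natCast_nonneg p
        rw [Finset.mem_Icc] at hu
        exact windowPrimes_subset_savedPrimes ha hba hu.1 hu.2 hm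

lemma tendsto_comp_mul_natCast_div {f : ℝ → ℝ} (hf : Tendsto (fun x => f x / x) atTop (𝓝 1))
    {c : ℝ} (hc : 0 < c) : Tendsto (fun m : ℕ => f (c * m) / m) atTop (𝓝 c) := by
  have hcomp := (hf.comp (tendsto_natCast_atTop_atTop.const_mul_atTop hc)).const_mul c
  rw [mul_one] at hcomp
  refine hcomp.congr fun m => ?_
  rw [Function.comp_apply, ← mul_div_assoc, mul_div_mul_left _ _ hc.ne']

theorem eventually_reducedLcm_le_exp {a b : ℕ} (ha : 0 < a) (hba : b ≤ a) (K : ℕ) {c : ℝ}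
    (hc : 2 * a - b - ∑ u ∈ Finset.Icc 1 K, (a / u - windowStart a b u) < c) :
    ∀ᶠ m : ℕ in atTop, (reducedLcm (a * m) (b * m) : ℝ) ≤ Real.exp (c * m) := by
  have ha' : (0 : ℝ) < a := Nat.cast_pos.2 ha
  have hba' : (b : ℝ) ≤ a := Nat.cast_le.2 hba
  have hlim : Tendsto (fun m : ℕ => psi ((2 * a - b) * m) / m - ∑ u ∈ Finset.Icc 1 K,
      (theta (a / u * m) / m - theta (windowStart a b u * m) / m)) atTop
      (𝓝 (2 * a - b - ∑ u ∈ Finset.Icc 1 K, (a / u - windowStart a b u))) := by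
    refine (tendsto_comp_mul_natCast_div tendsto_psi_div_self (by linarith)).sub
      (tendsto_finsetSum _ fun u hu => ?_)
    have hu₁ : 0 < u := (Finset.mem_Icc.1 hu).1
    exact (tendsto_comp_mul_natCast_div tendsto_theta_div_self (by positivity)).sub
      (tendsto_comp_mul_natCast_div tendsto_theta_div_self (windowStart_pos ha hba hu₁))
  filter_upwards [hlim.eventually_lt_const hc, eventually_gt_atTop 0,
    eventually_ge_atTop (4 * K ^ 2)] with m hlt hm₀ hm
  have hcast : ((2 * (a * m) - b * m : ℕ) : ℝ) = (2 * a - b) * m := by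
    have : b * m ≤ 2 * (a * m) := by nlinarith
    push_cast [this]
    ring
  rw [← Real.log_le_iff_le_exp (by exact_mod_cast reducedLcm_pos _ _), log_reducedLcm, hcast]
  simp only [← sub_div, ← Finset.sum_div] at hlt
  rw [div_lt_iff₀ (Nat.cast_pos.2 hm₀)] at hlt
  linarith [sum_theta_sub_theta_le ha hba hm]

end ReducedLcm

section ConjugateIntegers

variable {R : Type*} [CommRing R] {x y : R} {s n : ℤ}

lemma exists_pow_mul_pow_eq_add_mul (hs : x + y = s) (hn : x * y = n) (a b : ℕ) :
    ∃ u v : ℤ, x ^ a * y ^ b = u + v * x ∧ y ^ a * x ^ b = u + v * y := by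
  induction a with
  | zero =>
    induction b with
    | zero => exact ⟨1, 0, by simp, by simp⟩
    | succ b ih =>
      obtain ⟨u, v, hxy, hyx⟩ := ih
      refine ⟨u * s + v * n, -u, ?_, ?_⟩
      · rw [pow_succ, ← mul_assoc, hxy]
        push_cast
        linear_combination u * hs + v * hn
      · rw [pow_succ, ← mul_assoc, hyx]
        push_cast
        linear_combination u * hs + v * hn
  | succ a ih =>
    obtain ⟨u, v, hxy, hyx⟩ := ih
    refine ⟨-(v * n), u + v * s, ?_, ?_⟩
    · rw [pow_succ, mul_right_comm, hxy]
      push_cast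
      linear_combination v * x * hs - v * hn
    · rw [pow_succ, mul_right_comm, hyx]
      push_cast
      linear_combination v * y * hs - v * hn

lemma exists_int_pow_mul_pow_add (hs : x + y = s) (hn : x * y = n) (a b : ℕ) :
    ∃ z : ℤ, x ^ a * y ^ b + y ^ a * x ^ b = z := by
  obtain ⟨u, v, hxy, hyx⟩ := exists_pow_mul_pow_eq_add_mul hs hn a b
  refine ⟨2 * u + v * s, ?_⟩
  rw [hxy, hyx]
  push_cast
  linear_combination v * hs

lemma exists_int_pow_mul_pow_sub (hs : x + y = s) (hn : x * y = n) (a b : ℕ) :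
    ∃ z : ℤ, x ^ a * y ^ b - y ^ a * x ^ b = (y - x) * z := by
  obtain ⟨u, v, hxy, hyx⟩ := exists_pow_mul_pow_eq_add_mul hs hn a b
  refine ⟨-v, ?_⟩
  rw [hxy, hyx]
  push_cast
  ring

lemma exists_int_two_mul_sum_eq {S : Finset (ℕ × ℕ)} (hS : ∀ p ∈ S, p.swap ∈ S) {f : ℕ × ℕ → R}
    {c : R} (h : ∀ p ∈ S, ∃ z : ℤ, f p + f p.swap = c * z) : ∃ z : ℤ, 2 * ∑ p ∈ S, f p = c * z := by
  choose! z hz using h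
  refine ⟨∑ p ∈ S, z p, ?_⟩
  have hswap : ∑ p ∈ S, f p.swap = ∑ p ∈ S, f p :=
    Finset.sum_nbij' Prod.swap Prod.swap hS hS (fun _ _ => Prod.swap_swap _)
      (fun _ _ => Prod.swap_swap _) fun _ _ => rfl
  calc 2 * ∑ p ∈ S, f p = ∑ p ∈ S, (f p + f p.swap) := by
        rw [Finset.sum_add_distrib, hswap, two_mul]
    _ = c * (∑ p ∈ S, z p : ℤ) := by
        rw [Finset.sum_congr rfl hz, Int.cast_sum, Finset.mul_sum]

end ConjugateIntegers

section EulerIntegral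

open Set MeasureTheory

/-- The integral `∫₀¹ xᴺ (1 - x)ᴺ / (x - t)ᴹ⁺¹ dx`, whose expansion in powers of `x - t` is the
source of the linear forms in `1` and `log ((1 - t) / (-t))`. -/
noncomputable def eulerIntegral (N M : ℕ) (t : ℝ) : ℝ :=
  ∫ x in (0 : ℝ)..1, x ^ N * (1 - x) ^ N / (x - t) ^ (M + 1)

/-- The product of the `i`-th term of `((x - t) + t) ^ N` and the `j`-th term of
`((1 - t) - (x - t)) ^ N`, stripped of its factor `(x - t) ^ (i + j)`. -/
def expansionCoeff (N : ℕ) (t : ℝ) (p : ℕ × ℕ) : ℝ :=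
  N.choose p.1 * N.choose p.2 * (-1) ^ p.2 * (t ^ (N - p.1) * (1 - t) ^ (N - p.2))

/-- The coefficient of `(x - t) ^ M` in `x ^ N * (1 - x) ^ N`, hence that of the logarithm in
`eulerIntegral N M t`. -/
def logCoeff (N M : ℕ) (t : ℝ) : ℝ :=
  ∑ p ∈ Finset.range (N + 1) ×ˢ Finset.range (N + 1) with p.1 + p.2 = M, expansionCoeff N t p

/-- The part of `eulerIntegral N M t` contributed by the powers of `x - t` with exponent other
than `-1`. -/
noncomputable def algebraicPart (N M : ℕ) (t : ℝ) : ℝ :=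
  ∑ p ∈ Finset.range (N + 1) ×ˢ Finset.range (N + 1) with ¬ p.1 + p.2 = M, expansionCoeff N t p *
    (((1 - t) ^ ((p.1 + p.2 : ℕ) - M : ℤ) - (-t) ^ ((p.1 + p.2 : ℕ) - M : ℤ)) /
      ((p.1 + p.2 : ℕ) - M))

lemma pow_mul_one_sub_pow_eq_sum (N : ℕ) (t x : ℝ) : x ^ N * (1 - x) ^ N =
    ∑ p ∈ Finset.range (N + 1) ×ˢ Finset.range (N + 1),
      expansionCoeff N t p * (x - t) ^ (p.1 + p.2) := by
  have hx : x ^ N = ∑ i ∈ Finset.range (N + 1), (x - t) ^ i * t ^ (N - i) * N.choose i := by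
    rw [← add_pow, sub_add_cancel]
  have hx' : (1 - x) ^ N =
      ∑ j ∈ Finset.range (N + 1), (-(x - t)) ^ j * (1 - t) ^ (N - j) * N.choose j := by
    rw [← add_pow]
    ring
  rw [hx, hx', Finset.sum_mul_sum, ← Finset.sum_product']
  refine Finset.sum_congr rfl fun p _ => ?_
  rw [expansionCoeff, neg_pow (x - t), pow_add]
  ring

variable {t : ℝ}

lemma sub_pos_of_mem_uIcc_zero_one (ht : t < 0) {x : ℝ} (hx : x ∈ uIcc (0 : ℝ) 1) : 0 < x - t := by
  rw [uIcc_of_le zero_le_one] at hx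
  linarith [hx.1]

lemma integral_sub_zpow_neg_one (ht : t < 0) :
    ∫ x in (0 : ℝ)..1, (x - t) ^ (-1 : ℤ) = Real.log ((1 - t) / -t) := by
  simp only [zpow_neg, zpow_one]
  rw [intervalIntegral.integral_comp_sub_right (fun x => x⁻¹) t, zero_sub,
    integral_inv_of_pos (by linarith) (by linarith)]

lemma integral_sub_zpow (ht : t < 0) {k : ℤ} (hk : k ≠ 0) :
    ∫ x in (0 : ℝ)..1, (x - t) ^ (k - 1) = ((1 - t) ^ k - (-t) ^ k) / k := by
  have hzero : (0 : ℝ) ∉ uIcc (0 - t) (1 - t) :=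
    notMem_uIcc_of_lt (by linarith) (by linarith)
  rw [intervalIntegral.integral_comp_sub_right (fun x => x ^ (k - 1)) t,
    integral_zpow (Or.inr ⟨by omega, hzero⟩)]
  simp

theorem eulerIntegral_eq_add (N M : ℕ) (ht : t < 0) : eulerIntegral N M t =
    logCoeff N M t * Real.log ((1 - t) / -t) + algebraicPart N M t := by
  have hexpand : eulerIntegral N M t =
      ∫ x in (0 : ℝ)..1, ∑ p ∈ Finset.range (N + 1) ×ˢ Finset.range (N + 1),
        expansionCoeff N t p * (x - t) ^ ((p.1 + p.2 : ℕ) - M - 1 : ℤ) := by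
    refine intervalIntegral.integral_congr fun x hx => ?_
    have hxt := (sub_pos_of_mem_uIcc_zero_one ht hx).ne'
    simp only [pow_mul_one_sub_pow_eq_sum N t x, Finset.sum_div]
    refine Finset.sum_congr rfl fun p _ => ?_
    rw [mul_div_assoc, ← zpow_natCast, ← zpow_natCast, ← zpow_sub₀ hxt, sub_sub]
    push_cast
    rfl
  rw [hexpand, intervalIntegral.integral_finsetSum fun p _ => ?integrable,
    ← Finset.sum_filter_add_sum_filter_not _ (fun p => p.1 + p.2 = M), logCoeff, algebraicPart,
    Finset.sum_mul]
  case integrable =>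
    refine (continuousOn_const.mul (ContinuousOn.zpow₀ (by fun_prop) _ fun x hx =>
      Or.inl ?_)).intervalIntegrable
    exact (sub_pos_of_mem_uIcc_zero_one ht hx).ne'
  congr 1 <;> refine Finset.sum_congr rfl fun p hp => ?_ <;>
    rw [intervalIntegral.integral_const_mul]
  · rw [(Finset.mem_filter.1 hp).2, sub_self, zero_sub, integral_sub_zpow_neg_one ht]
  · have hne := (Finset.mem_filter.1 hp).2
    rw [integral_sub_zpow ht (by omega)]
    push_cast
    rfl

variable {N M : ℕ} {n : ℤ}

lemma swap_mem_filter_product {P : ℕ → Prop} [DecidablePred P] {T : Finset ℕ} :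
    ∀ p ∈ {p ∈ T ×ˢ T | P (p.1 + p.2)}, p.swap ∈ {p ∈ T ×ˢ T | P (p.1 + p.2)} := by
  intro p hp
  simpa only [Finset.mem_filter, Finset.mem_product, Prod.fst_swap, Prod.snd_swap, add_comm,
    and_comm] using hp

lemma exists_int_two_mul_logCoeff (hn : t * (1 - t) = n) (hM : Even M) :
    ∃ z : ℤ, 2 * logCoeff N M t = z := by
  have hs : t + (1 - t) = (1 : ℤ) := by simp
  suffices h : ∃ z : ℤ, 2 * logCoeff N M t = 1 * z by simpa only [one_mul] using h
  refine exists_int_two_mul_sum_eq (swap_mem_filter_product (P := (· = M))) fun p hp => ?_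
  obtain ⟨z, hz⟩ := exists_int_pow_mul_pow_add hs hn (N - p.1) (N - p.2)
  have hsign : (-1 : ℝ) ^ p.1 = (-1) ^ p.2 := by
    have hparity : Even (p.1 + p.2) := (Finset.mem_filter.1 hp).2 ▸ hM
    exact neg_one_pow_congr (Nat.even_add.1 hparity)
  refine ⟨N.choose p.1 * N.choose p.2 * (-1) ^ p.2 * z, ?_⟩
  simp only [expansionCoeff, Prod.fst_swap, Prod.snd_swap, hsign]
  push_cast
  rw [← hz]
  ring

lemma pow_mul_pow_mul_zpow_sub_zpow (ht : t ≠ 0) (ht' : 1 - t ≠ 0) (hM : Even M) (hMN : M ≤ N)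
    {i j : ℕ} (hi : i ≤ N) (hj : j ≤ N) : t ^ (N - i) * (1 - t) ^ (N - j) *
      ((1 - t) ^ ((i + j : ℕ) - M : ℤ) - (-t) ^ ((i + j : ℕ) - M : ℤ)) =
    t ^ (N - i) * (1 - t) ^ (N - M + i) -
      (-1) ^ (i + j) * (t ^ (N - M + j) * (1 - t) ^ (N - j)) := by
  have hpow : ∀ {z : ℝ} {k l : ℕ}, z ≠ 0 → k ≤ N →
      z ^ (N - k) * z ^ ((k + l : ℕ) - M : ℤ) = z ^ (N - M + l) := by
    intro z k l hz hk
    rw [← zpow_natCast, ← zpow_natCast, ← zpow_add₀ hz]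
    congr 1
    push_cast [hk, hMN]
    ring
  have hneg : (-t) ^ ((i + j : ℕ) - M : ℤ) = (-1) ^ (i + j) * t ^ ((i + j : ℕ) - M : ℤ) := by
    rw [neg_eq_neg_one_mul t, mul_zpow, zpow_sub₀ (by norm_num), zpow_natCast, zpow_natCast,
      hM.neg_one_pow, div_one]
  have hj_pow := hpow (l := i) ht' hj
  rw [add_comm j i] at hj_pow
  rw [hneg, ← hj_pow, ← hpow ht hi]
  ring

lemma exists_int_reducedLcm_mul (hMN : M ≤ N) {i j : ℕ} (hi : i ≤ N) (hj : j ≤ N)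
    (hij : i + j ≠ M) : ∃ z : ℤ,
      (reducedLcm N M * (N.choose i * N.choose j) : ℝ) = ((i + j : ℕ) - M) * z := by
  have hmod : i + j ≡ M [MOD ((i + j : ℕ) - M : ℤ).natAbs] := by
    rw [← Int.natCast_modEq_iff, Int.modEq_comm, Int.modEq_iff_dvd, Int.natAbs_dvd]
  have hdvd := dvd_reducedLcm_mul (N := N) (M := M) (by omega) (by omega) hmod
  obtain ⟨z, hz⟩ := Int.natAbs_dvd.1 (Int.natCast_dvd_natCast.2 hdvd)
  exact ⟨z, by exact_mod_cast hz⟩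

lemma reducedLcm_mul_algebraicPart_term (ht : t < 0) (hM : Even M) (hMN : M ≤ N) {i j : ℕ}
    (hi : i ≤ N) (hj : j ≤ N) (hij : i + j ≠ M) {z : ℤ}
    (hz : (reducedLcm N M * (N.choose i * N.choose j) : ℝ) = ((i + j : ℕ) - M) * z) :
    reducedLcm N M * (expansionCoeff N t (i, j) *
      (((1 - t) ^ ((i + j : ℕ) - M : ℤ) - (-t) ^ ((i + j : ℕ) - M : ℤ)) / ((i + j : ℕ) - M))) =
    z * ((-1) ^ j * (t ^ (N - i) * (1 - t) ^ (N - M + i)) -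
      (-1) ^ i * (t ^ (N - M + j) * (1 - t) ^ (N - j))) := by
  have hne : ((i + j : ℕ) - M : ℝ) ≠ 0 := sub_ne_zero.2 (by exact_mod_cast hij)
  have hsign : (-1 : ℝ) ^ j * (-1) ^ (i + j) = (-1) ^ i := by
    rw [pow_add, mul_left_comm, ← mul_pow, neg_one_mul, neg_neg, one_pow, mul_one]
  calc _ = reducedLcm N M * (N.choose i * N.choose j) / ((i + j : ℕ) - M) * ((-1) ^ j *
        (t ^ (N - i) * (1 - t) ^ (N - j) *
          ((1 - t) ^ ((i + j : ℕ) - M : ℤ) - (-t) ^ ((i + j : ℕ) - M : ℤ)))) := by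
        rw [expansionCoeff]
        ring
    _ = _ := by
        rw [hz, mul_div_cancel_left₀ _ hne,
          pow_mul_pow_mul_zpow_sub_zpow ht.ne (by linarith) hM hMN hi hj, mul_sub,
          ← mul_assoc ((-1) ^ j) ((-1) ^ (i + j)), hsign]

/-- Adding the `(i, j)` and `(j, i)` terms leaves differences of conjugates
`t ^ a * (1 - t) ^ b - (1 - t) ^ a * t ^ b`, which are integer multiples of `1 - 2 * t`. -/
lemma exists_int_two_mul_reducedLcm_mul_algebraicPart (ht : t < 0) (hn : t * (1 - t) = n)
    (hM : Even M) (hMN : M ≤ N) :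
    ∃ z : ℤ, 2 * (reducedLcm N M * algebraicPart N M t) = (1 - 2 * t) * z := by
  have hs : t + (1 - t) = (1 : ℤ) := by simp
  rw [algebraicPart, Finset.mul_sum]
  refine exists_int_two_mul_sum_eq (swap_mem_filter_product (P := fun k => ¬ k = M)) ?_
  rintro ⟨i, j⟩ hp
  simp only [Finset.mem_filter, Finset.mem_product, Finset.mem_range, Nat.lt_succ_iff] at hp
  obtain ⟨⟨hi, hj⟩, hij⟩ := hp
  obtain ⟨z, hz⟩ := exists_int_reducedLcm_mul hMN hi hj hij
  have hz' : (reducedLcm N M * (N.choose j * N.choose i) : ℝ) = ((j + i : ℕ) - M) * z := by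
    rw [mul_comm (N.choose j : ℝ), add_comm j, hz]
  obtain ⟨zi, hzi⟩ := exists_int_pow_mul_pow_sub hs hn (N - i) (N - M + i)
  obtain ⟨zj, hzj⟩ := exists_int_pow_mul_pow_sub hs hn (N - j) (N - M + j)
  refine ⟨z * ((-1) ^ j * zi + (-1) ^ i * zj), ?_⟩
  simp only [Prod.swap_prod_mk]
  rw [reducedLcm_mul_algebraicPart_term ht hM hMN hi hj hij hz,
    reducedLcm_mul_algebraicPart_term ht hM hMN hj hi (by omega) hz']
  push_cast
  linear_combination z * (-1) ^ j * hzi + z * (-1) ^ i * hzj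

theorem exists_int_mul_log_sub_eq (ht : t < 0) (hn : t * (1 - t) = n) (hM : Even M)
    (hMN : M ≤ N) : ∃ a b : ℤ, (a : ℝ) = 2 * (reducedLcm N M * logCoeff N M t) ∧
      a * ((1 - 2 * t) * Real.log (-t / (1 - t))) - b =
        -(2 * (1 - 2 * t) * (reducedLcm N M * eulerIntegral N M t)) := by
  obtain ⟨A, hA⟩ := exists_int_two_mul_logCoeff hn hM (N := N)
  obtain ⟨B, hB⟩ := exists_int_two_mul_reducedLcm_mul_algebraicPart ht hn hM hMN
  have hlog : Real.log (-t / (1 - t)) = -Real.log ((1 - t) / -t) := by rw [← Real.log_inv, inv_div]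
  have ha : ((reducedLcm N M * A : ℤ) : ℝ) = 2 * (reducedLcm N M * logCoeff N M t) := by
    push_cast
    rw [← hA]
    ring
  refine ⟨reducedLcm N M * A, (1 - 4 * n) * B, ha, ?_⟩
  rw [ha, hlog, eulerIntegral_eq_add N M ht]
  push_cast
  linear_combination (1 - 2 * t) * hB - 4 * B * hn

end EulerIntegral

section Estimates

open Filter Set MeasureTheory

/-- The growth rate of the integrand of `eulerIntegral (a * m) (b * m) t` at `x` as `m` grows. -/
noncomputable def eulerRate (a b : ℕ) (t x : ℝ) : ℝ :=
  x ^ a * (1 - x) ^ a / (x - t) ^ b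

variable {a b : ℕ} {t : ℝ}

lemma eulerIntegral_mul_eq (a b m : ℕ) (t : ℝ) : eulerIntegral (a * m) (b * m) t =
    ∫ x in (0 : ℝ)..1, eulerRate a b t x ^ m * (x - t)⁻¹ := by
  refine intervalIntegral.integral_congr fun x _ => ?_
  simp only [eulerRate, mul_pow, pow_mul, pow_succ, div_eq_mul_inv, mul_inv]
  ring

lemma eulerRate_nonneg (ht : t < 0) {x : ℝ} (hx : x ∈ Icc (0 : ℝ) 1) : 0 ≤ eulerRate a b t x := by
  have hx₀ := hx.1
  have hx₁ := sub_nonneg.2 hx.2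
  have hxt : 0 < x - t := by linarith
  unfold eulerRate
  positivity

lemma continuousOn_eulerRate_pow_mul_inv (ht : t < 0) (m : ℕ) :
    ContinuousOn (fun x => eulerRate a b t x ^ m * (x - t)⁻¹) (Icc 0 1) := by
  have hne : ∀ x ∈ Icc (0 : ℝ) 1, x - t ≠ 0 := fun x hx => by linarith [hx.1]
  unfold eulerRate
  exact ((ContinuousOn.div (by fun_prop) (by fun_prop) fun x hx =>
    pow_ne_zero _ (hne x hx)).pow m).mul (ContinuousOn.inv₀ (by fun_prop) hne)

lemma intervalIntegrable_eulerRate_pow_mul_inv (ht : t < 0) (m : ℕ) {c d : ℝ} (hc : 0 ≤ c)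
    (hcd : c ≤ d) (hd : d ≤ 1) :
    IntervalIntegrable (fun x => eulerRate a b t x ^ m * (x - t)⁻¹) volume c d :=
  ((continuousOn_eulerRate_pow_mul_inv ht m).mono
    (Icc_subset_Icc hc hd)).intervalIntegrable_of_Icc hcd

lemma eulerIntegral_le (ht : t < 0) {B : ℝ} (h : ∀ x ∈ Icc (0 : ℝ) 1, eulerRate a b t x ≤ B)
    (m : ℕ) : eulerIntegral (a * m) (b * m) t ≤ B ^ m / -t := by
  have hle : ∫ x in (0 : ℝ)..1, eulerRate a b t x ^ m * (x - t)⁻¹ ≤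
      ∫ _ in (0 : ℝ)..1, B ^ m * (-t)⁻¹ := by
    refine intervalIntegral.integral_mono_on zero_le_one
      (intervalIntegrable_eulerRate_pow_mul_inv ht m le_rfl zero_le_one le_rfl)
      intervalIntegrable_const fun x hx => ?_
    have hx₀ := hx.1
    have hrate : 0 ≤ eulerRate a b t x := eulerRate_nonneg ht hx
    have hB := hrate.trans (h x hx)
    have hxt : 0 < x - t := by linarith
    have ht' : 0 < -t := by linarith
    gcongr
    · exact h x hx
    · linarith
  rw [eulerIntegral_mul_eq]
  simpa only [intervalIntegral.integral_const, sub_zero, one_smul, div_eq_mul_inv] using hle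

lemma le_eulerIntegral (ht : t < 0) {B c d : ℝ} (hB : 0 ≤ B) (hc : 0 ≤ c) (hcd : c ≤ d)
    (hd : d ≤ 1) (h : ∀ x ∈ Icc c d, B ≤ eulerRate a b t x) (m : ℕ) :
    (d - c) * (B ^ m / (1 - t)) ≤ eulerIntegral (a * m) (b * m) t := by
  have hle : ∫ _ in c..d, B ^ m * (1 - t)⁻¹ ≤
      ∫ x in c..d, eulerRate a b t x ^ m * (x - t)⁻¹ := by
    refine intervalIntegral.integral_mono_on hcd intervalIntegrable_const
      (intervalIntegrable_eulerRate_pow_mul_inv ht m hc hcd hd) fun x hx => ?_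
    have hx₀ := hx.1
    have hx₁ := hx.2
    have hxt : 0 < x - t := by linarith
    have ht₁ : 0 < 1 - t := by linarith
    have hrate := hB.trans (h x hx)
    gcongr
    · exact h x hx
    · linarith
  have hmono : ∫ x in c..d, eulerRate a b t x ^ m * (x - t)⁻¹ ≤
      ∫ x in (0 : ℝ)..1, eulerRate a b t x ^ m * (x - t)⁻¹ := by
    refine intervalIntegral.integral_mono_interval hc hcd hd ?_
      (intervalIntegrable_eulerRate_pow_mul_inv ht m le_rfl zero_le_one le_rfl)
    refine (ae_restrict_iff' measurableSet_Ioc).2 (Eventually.of_forall fun x hx => ?_)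
    have hx₀ := hx.1
    have hxt : 0 < x - t := by linarith
    exact mul_nonneg (pow_nonneg (eulerRate_nonneg ht (Ioc_subset_Icc_self hx)) m)
      (inv_nonneg.2 hxt.le)
  rw [eulerIntegral_mul_eq]
  rw [intervalIntegral.integral_const, smul_eq_mul, ← div_eq_mul_inv] at hle
  exact hle.trans hmono

/-- Cauchy's estimate on the circle of radius `r` for the coefficient of `(x - t) ^ M`. -/
lemma abs_logCoeff_le (N M : ℕ) (ht : t ≤ 0) {r : ℝ} (hr : 0 < r) :
    |logCoeff N M t| ≤ ((r - t) * (r + 1 - t)) ^ N / r ^ M := by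
  have ht₁ : 0 ≤ 1 - t := by linarith
  have habs : ∀ p : ℕ × ℕ, |expansionCoeff N t p| =
      N.choose p.1 * N.choose p.2 * ((-t) ^ (N - p.1) * (1 - t) ^ (N - p.2)) := fun p => by
    simp only [expansionCoeff, abs_mul, abs_pow, abs_neg, abs_one, one_pow, mul_one, Nat.abs_cast,
      abs_of_nonpos ht, abs_of_nonneg ht₁]
  rw [le_div_iff₀ (by positivity)]
  calc |logCoeff N M t| * r ^ M
      ≤ (∑ p ∈ Finset.range (N + 1) ×ˢ Finset.range (N + 1) with p.1 + p.2 = M,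
          |expansionCoeff N t p|) * r ^ M := by
        gcongr
        exact Finset.abs_sum_le_sum_abs _ _
    _ = ∑ p ∈ Finset.range (N + 1) ×ˢ Finset.range (N + 1) with p.1 + p.2 = M,
          |expansionCoeff N t p| * r ^ (p.1 + p.2) := by
        rw [Finset.sum_mul]
        exact Finset.sum_congr rfl fun p hp => by rw [(Finset.mem_filter.1 hp).2]
    _ ≤ ∑ p ∈ Finset.range (N + 1) ×ˢ Finset.range (N + 1),
          |expansionCoeff N t p| * r ^ (p.1 + p.2) :=
        Finset.sum_le_sum_of_subset_of_nonneg (Finset.filter_subset _ _)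
          fun p _ _ => by positivity
    _ = (r + -t) ^ N * (r + (1 - t)) ^ N := by
        rw [add_pow, add_pow, Finset.sum_mul_sum, ← Finset.sum_product']
        refine Finset.sum_congr rfl fun p _ => ?_
        rw [habs, pow_add]
        ring
    _ = ((r - t) * (r + 1 - t)) ^ N := by
        rw [← mul_pow]
        ring

lemma abs_logCoeff_mul_le (ht : t ≤ 0) {r B : ℝ} (hr : 0 < r)
    (h : ((r - t) * (r + 1 - t)) ^ a / r ^ b ≤ B) (m : ℕ) :
    |logCoeff (a * m) (b * m) t| ≤ B ^ m := by
  refine (abs_logCoeff_le _ _ ht hr).trans ?_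
  rw [pow_mul, pow_mul, ← div_pow]
  have hrt : 0 ≤ (r - t) * (r + 1 - t) := mul_nonneg (by linarith) (by linarith)
  gcongr

/-- The exponential rates are `δ` for the common denominator, `ρ` and `σ` for the integral from
above and below, and `β` for its logarithmic coefficient. The denominator cancels when the
coefficient is compared with the linear form, so that `δ` only enters through the size of the
form. -/
theorem irrationalityMeasureLE_of_eulerRate (ha : 0 < a) (hba : b ≤ a) (hb : Even b) (ht : t < 0)
    {n : ℤ} (hn : t * (1 - t) = n) (K : ℕ) {δ ρ σ β r c d : ℝ}
    (hδ : 2 * a - b - ∑ u ∈ Finset.Icc 1 K, (a / u - windowStart a b u) < δ)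
    (hρ : ∀ x ∈ Icc (0 : ℝ) 1, eulerRate a b t x ≤ Real.exp (-ρ))
    (hc : 0 ≤ c) (hcd : c < d) (hd : d ≤ 1)
    (hσ : ∀ x ∈ Icc c d, Real.exp (-σ) ≤ eulerRate a b t x)
    (hr : 0 < r) (hβ : ((r - t) * (r + 1 - t)) ^ a / r ^ b ≤ Real.exp β)
    (hδρ : δ < ρ) (hβσ : 0 ≤ β + σ) :
    IrrationalityMeasureLE ((1 - 2 * t) * Real.log (-t / (1 - t))) ((β + σ) / (ρ - δ)) := by
  have ht₀ : 0 < -t := by linarith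
  have ht₁ : 0 < 1 - t := by linarith
  have ht₂ : 0 < 1 - 2 * t := by linarith
  have hdc := sub_pos.2 hcd
  refine irrationalityMeasureLE_of_linearForms (C := 2 * (1 - 2 * t) / -t)
    (C' := (1 - t) / ((1 - 2 * t) * (d - c))) (by positivity) (by positivity) (sub_pos.2 hδρ) hβσ ?_
  filter_upwards [eventually_reducedLcm_le_exp ha hba K hδ] with m hD
  obtain ⟨A, B, hA, hform⟩ := exists_int_mul_log_sub_eq ht hn (hb.mul_right m)
    (Nat.mul_le_mul_right m hba)
  have hDpos : (0 : ℝ) < reducedLcm (a * m) (b * m) := Nat.cast_pos.2 (reducedLcm_pos _ _)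
  have hupper := eulerIntegral_le ht hρ m
  have hlower := le_eulerIntegral ht (Real.exp_pos _).le hc hcd.le hd hσ m
  have hcoeff := abs_logCoeff_mul_le ht.le hr hβ m
  rw [← Real.exp_nat_mul] at hupper hlower hcoeff
  set D := (reducedLcm (a * m) (b * m) : ℝ)
  set F := eulerIntegral (a * m) (b * m) t
  have hF : 0 < F := lt_of_lt_of_le (by positivity) hlower
  have habs : |A * ((1 - 2 * t) * Real.log (-t / (1 - t))) - B| = 2 * (1 - 2 * t) * (D * F) := by
    rw [hform, abs_neg, abs_of_pos (by positivity)]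
  refine ⟨A, B, abs_pos.1 (habs ▸ by positivity), ?_, ?_⟩
  · calc _ = 2 * (1 - 2 * t) * (D * F) := habs
      _ ≤ 2 * (1 - 2 * t) * (Real.exp (δ * m) * (Real.exp (m * -ρ) / -t)) := by gcongr
      _ = 2 * (1 - 2 * t) / -t * Real.exp (-(ρ - δ) * m) := by
          rw [show -(ρ - δ) * m = δ * m + m * -ρ by ring, Real.exp_add]
          ring
  · have hexp : Real.exp (m * β) = Real.exp ((β + σ) * m) * Real.exp (m * -σ) := by
      rw [← Real.exp_add]
      ring_nf
    calc |(A : ℝ)| = 2 * (D * |logCoeff (a * m) (b * m) t|) := by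
          rw [hA, abs_mul, abs_mul, abs_of_pos hDpos, abs_two]
      _ ≤ 2 * (D * Real.exp (m * β)) := by gcongr
      _ = (1 - t) / ((1 - 2 * t) * (d - c)) * Real.exp ((β + σ) * m) *
            (2 * (1 - 2 * t) * (D * ((d - c) * (Real.exp (m * -σ) / (1 - t))))) := by
          rw [hexp]
          field_simp
      _ ≤ _ := by
          rw [habs]
          gcongr

end Estimates

section SqrtTwentyOne

open Real

lemma le_exp_of_pow_le {x : ℝ} (hx : 0 ≤ x) {p q : ℕ} (hq : q ≠ 0)
    (h : x ^ q ≤ 2.7182818283 ^ p) : x ≤ exp (p / q) := by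
  rw [← pow_le_pow_iff_left₀ hx (exp_pos _).le hq, ← exp_nat_mul,
    mul_div_cancel₀ _ (Nat.cast_ne_zero.2 hq), ← exp_one_pow]
  exact h.trans (pow_le_pow_left₀ (by norm_num) exp_one_gt_d9.le p)

lemma exp_neg_le_of_pow_mul_le {x : ℝ} (hx : 0 ≤ x) {p q : ℕ} (hq : q ≠ 0)
    (h : 1 ≤ x ^ q * 2.7182818283 ^ p) : exp (-(p / q)) ≤ x := by
  rw [← pow_le_pow_iff_left₀ (exp_pos _).le hx hq, ← exp_nat_mul, mul_neg,
    mul_div_cancel₀ _ (Nat.cast_ne_zero.2 hq), exp_neg, ← exp_one_pow,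
    inv_le_iff_one_le_mul₀ (by positivity)]
  refine h.trans ?_
  gcongr
  exact exp_one_gt_d9.le

lemma le_exp_neg_of_pow_mul_le {x : ℝ} (hx : 0 ≤ x) {p q : ℕ} (hq : q ≠ 0)
    (h : x ^ q * 2.7182818286 ^ p ≤ 1) : x ≤ exp (-(p / q)) := by
  rw [← pow_le_pow_iff_left₀ hx (exp_pos _).le hq, ← exp_nat_mul, mul_neg,
    mul_div_cancel₀ _ (Nat.cast_ne_zero.2 hq), exp_neg, ← exp_one_pow,
    ← one_div, le_div_iff₀ (by positivity)]
  refine le_trans ?_ h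
  gcongr
  exact exp_one_lt_d9.le

lemma pow_mul_le_mul_exp (k : ℕ) {x y x₀ y₀ : ℝ} (hx : 0 ≤ x) (hy : 0 ≤ y) (hx₀ : 0 < x₀)
    (hy₀ : 0 < y₀) :
    x ^ k * y ≤ x₀ ^ k * y₀ * exp (k * (x / x₀ - 1) + (y / y₀ - 1)) := by
  have htangent : ∀ z : ℝ, z ≤ exp (z - 1) := fun z => by linarith [add_one_le_exp (z - 1)]
  calc x ^ k * y = x₀ ^ k * y₀ * ((x / x₀) ^ k * (y / y₀)) := by
        rw [div_pow]
        field_simp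
    _ ≤ x₀ ^ k * y₀ * (exp (x / x₀ - 1) ^ k * exp (y / y₀ - 1)) := by
        gcongr <;> exact htangent _
    _ = _ := by rw [← exp_nat_mul, ← exp_add]

/-- The negative root of `X ^ 2 - X - 5`, used as the parameter `t`, since
`1 - 2 * t = √21` and `(√21 - 1) / (√21 + 1) = -t / (1 - t)`. -/
noncomputable def negRoot : ℝ := (1 - √21) / 2

lemma one_sub_two_mul_negRoot : 1 - 2 * negRoot = √21 := by
  unfold negRoot
  ring

lemma negRoot_mul_one_sub : negRoot * (1 - negRoot) = (-5 : ℤ) := by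
  have hsq : √21 ^ 2 = 21 := sq_sqrt (by norm_num)
  unfold negRoot
  push_cast
  linear_combination -hsq / 4

lemma negRoot_mem_Ioo : negRoot ∈ Set.Ioo (-1.791288 : ℝ) (-1.791287) := by
  have hlt : √21 < 4.582576 := (sqrt_lt' (by norm_num)).2 (by norm_num)
  have hgt : 4.582575 < √21 := lt_sqrt_of_sq_lt (by norm_num)
  unfold negRoot
  constructor <;> linarith

lemma sqrt_mul_log_eq : √21 * log ((√21 - 1) / (√21 + 1)) =
    (1 - 2 * negRoot) * log (-negRoot / (1 - negRoot)) := by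
  rw [← one_sub_two_mul_negRoot]
  congr 2
  rw [show 1 - 2 * negRoot - 1 = 2 * -negRoot by ring,
    show 1 - 2 * negRoot + 1 = 2 * (1 - negRoot) by ring, mul_div_mul_left _ _ two_ne_zero]

lemma denominatorRate_lt :
    2 * (11 : ℕ) - (10 : ℕ) - ∑ u ∈ Finset.Icc 1 17, ((11 : ℕ) / u - windowStart 11 10 u) <
      (9.363 : ℝ) := by
  norm_num [Finset.sum_Icc_succ_top, windowStart]

/-- The proof bounds `h ^ 11 * u`, with `h = x * (1 - x) / u` and `u = x - t`, by tangent lines of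
`exp` at the values `0.11043` and `2.2411` which `h` and `u` nearly take at the maximum. -/
lemma eulerRate_negRoot_le {x : ℝ} (hx : x ∈ Set.Icc (0 : ℝ) 1) :
    eulerRate 11 10 negRoot x ≤ exp (-(117 / 5)) := by
  obtain ⟨hgt, hlt⟩ := negRoot_mem_Ioo
  have hu : 0 < x - negRoot := by linarith [hx.1]
  have hx₁ := sub_nonneg.2 hx.2
  set u := x - negRoot with hu_def
  set h := x * (1 - x) / u with hh_def
  have hh : 0 ≤ h := div_nonneg (mul_nonneg hx.1 hx₁) hu.le
  have hhu : h * u = (1 - 2 * negRoot) * u - u ^ 2 - 5 := by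
    rw [hh_def, div_mul_cancel₀ _ hu.ne', hu_def]
    linear_combination (norm := (push_cast; ring)) negRoot_mul_one_sub
  have hexponent : (11 : ℕ) * (h / 0.11043 - 1) + (u / 2.2411 - 1) ≤ 1 / 35 := by
    refine le_of_mul_le_mul_right ?_ hu
    have hlin : (1 - 2 * negRoot) * u ≤ 4.582576 * u := by gcongr; linarith
    have hquad : 11 / 0.11043 * (4.582576 * u - u ^ 2 - 5) + u ^ 2 / 2.2411 ≤
        (12 + 1 / 35) * u := by
      norm_num
      nlinarith [sq_nonneg (u - 2.241)]
    calc ((11 : ℕ) * (h / 0.11043 - 1) + (u / 2.2411 - 1)) * u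
        = 11 / 0.11043 * ((1 - 2 * negRoot) * u - u ^ 2 - 5) + u ^ 2 / 2.2411 - 12 * u := by
          rw [← hhu]
          push_cast
          ring
      _ ≤ 11 / 0.11043 * (4.582576 * u - u ^ 2 - 5) + u ^ 2 / 2.2411 - 12 * u := by gcongr
      _ ≤ 1 / 35 * u := by linarith
  have hnum : (0.11043 : ℝ) ^ 11 * 2.2411 ≤ exp (-((164 : ℕ) / (7 : ℕ))) :=
    le_exp_neg_of_pow_mul_le (by norm_num) (by norm_num) (by norm_num)
  calc eulerRate 11 10 negRoot x = h ^ 11 * u := by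
        rw [eulerRate, ← hu_def, hh_def, div_pow, mul_pow]
        field_simp
    _ ≤ 0.11043 ^ 11 * 2.2411 * exp ((11 : ℕ) * (h / 0.11043 - 1) + (u / 2.2411 - 1)) :=
        pow_mul_le_mul_exp 11 hh hu.le (by norm_num) (by norm_num)
    _ ≤ exp (-((164 : ℕ) / (7 : ℕ))) * exp (1 / 35) := by gcongr
    _ = exp (-(117 / 5)) := by
        rw [← exp_add]
        norm_num

lemma le_eulerRate_negRoot {x : ℝ} (hx : x ∈ Set.Icc (0.445 : ℝ) 0.455) :
    exp (-(47 / 2)) ≤ eulerRate 11 10 negRoot x := by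
  obtain ⟨hgt, hlt⟩ := negRoot_mem_Ioo
  obtain ⟨hx₀, hx₁⟩ := hx
  have hu : 0 < x - negRoot := by linarith
  have hu' : x - negRoot ≤ 2.246288 := by linarith
  have hprod : 0.246975 ≤ x * (1 - x) := by nlinarith
  calc exp (-(47 / 2)) ≤ 0.246975 ^ 11 / 2.246288 ^ 10 := by
        exact_mod_cast exp_neg_le_of_pow_mul_le (p := 47) (q := 2) (by norm_num) two_ne_zero
          (by norm_num)
    _ ≤ (x * (1 - x)) ^ 11 / (x - negRoot) ^ 10 := by gcongr
    _ = eulerRate 11 10 negRoot x := by rw [eulerRate, mul_pow]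

set_option exponentiation.threshold 500 in
/-- The radius `1.86` is close to the saddle point that minimises the left-hand side. -/
lemma cauchyBound_negRoot_le :
    ((1.86 - negRoot) * (1.86 + 1 - negRoot)) ^ 11 / 1.86 ^ 10 ≤ exp (499 / 20) := by
  obtain ⟨hgt, hlt⟩ := negRoot_mem_Ioo
  have hprod : (1.86 - negRoot) * (1.86 + 1 - negRoot) ≤ 16.983192 := by
    have hroot := negRoot_mul_one_sub
    push_cast at hroot
    linarith
  have hprod₀ : 0 ≤ (1.86 - negRoot) * (1.86 + 1 - negRoot) :=
    mul_nonneg (by linarith) (by linarith)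
  calc ((1.86 - negRoot) * (1.86 + 1 - negRoot)) ^ 11 / 1.86 ^ 10
      ≤ 16.983192 ^ 11 / 1.86 ^ 10 := by gcongr
    _ ≤ exp ((499 : ℕ) / (20 : ℕ)) := le_exp_of_pow_le (by norm_num) (by norm_num) (by norm_num)
    _ = exp (499 / 20) := by norm_num

end SqrtTwentyOne

theorem irrationality_measure_alpha_6 :
    ∀ κ : ℝ, κ > 3.45357 →
      {pq : ℤ × ℕ+ |
        |Real.sqrt 21 * Real.log ((Real.sqrt 21 - 1) / (Real.sqrt 21 + 1)) -
            (pq.1 : ℝ) / ((pq.2 : ℕ) : ℝ)| <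
          ((pq.2 : ℕ) : ℝ) ^ (-κ)}.Finite := by
  rw [sqrt_mul_log_eq]
  have hmeasure := irrationalityMeasureLE_of_eulerRate (a := 11) (b := 10) (by norm_num)
    (by norm_num) (by decide) (by linarith [negRoot_mem_Ioo.2]) negRoot_mul_one_sub 17
    denominatorRate_lt (fun _ => eulerRate_negRoot_le) (by norm_num) (by norm_num) (by norm_num)
    (fun _ => le_eulerRate_negRoot) (by norm_num) cauchyBound_negRoot_le (by norm_num)
    (by norm_num)
  exact hmeasure.mono (by norm_num)
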